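/- Let g : ℝ → ℂ be infinitely differentiable on (0,1) and h : ℝ → ℂ be infinitely differentiable on (−1/2, 1/2), and suppose there exist r > 0 and a holomorphic function F₀ on the disk B(1/2, r) ⊂ ℂ with g(x) = F₀(x) for all real x with |x − 1/2| < r and h(t) = F₀(1/2 + it) for all real t with |t| < r. Suppose moreover that S := ∑_{n=0}^∞ (2^n/(2n+1)!) ∫_0^{1/2} x^{2n+1} ( |g^{(n)}(x)|² + |g^{(n)}(1−x)|² + |h^{(n)}(1/2 − x)|² + |h^{(n)}(x − 1/2)|² ) dx < ∞, where g^{(n)}, h^{(n)} are iterated derivatives within (0,1) and (−1/2,1/2) respectively. Then there exists a holomorphic function F on the open square D = {z ∈ ℂ : 0 < Re z < 1 and |Im z| < min(Re z, 1 − Re z)} with F(x) = g(x) for x ∈ (0,1), F(1/2 + it) = h(t) for t ∈ (−1/2, 1/2), and ∫_D |F(z)|² dA(z) < ∞; moreover there are absolute constants c, C > 0 (independent of g, h) with c ∫_D |F|² dA ≤ S ≤ C ∫_D |F|² dA. -/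

import Mathlib

open MeasureTheory Set Metric
open scoped ENNReal NNReal

/-- The open square `D` with vertices `0`, `1/2 + i/2`, `1`, `1/2 - i/2`. -/
def SquareD : Set ℂ := {z : ℂ | 0 < z.re ∧ z.re < 1 ∧ |z.im| < min z.re (1 - z.re)}

/-- The two-diagonal (AHS)-type sum built from data `g` on the horizontal diagonal `(0,1)`
and `h` on the vertical diagonal (via `t ↦ F(1/2 + it)`, `t ∈ (-1/2,1/2)`). -/
noncomputable def diagDataSum (g h : ℝ → ℂ) : ℝ≥0∞ :=
  ∑' n : ℕ, ENNReal.ofReal ((2 : ℝ) ^ n / (Nat.factorial (2 * n + 1) : ℝ)) *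
    ∫⁻ x in Ioo (0 : ℝ) (1 / 2),
      ENNReal.ofReal (x ^ (2 * n + 1)) *
        ((‖iteratedDerivWithin n g (Ioo 0 1) x‖₊ : ℝ≥0∞) ^ 2 +
          (‖iteratedDerivWithin n g (Ioo 0 1) (1 - x)‖₊ : ℝ≥0∞) ^ 2 +
          (‖iteratedDerivWithin n h (Ioo (-(1 / 2)) (1 / 2)) (1 / 2 - x)‖₊ : ℝ≥0∞) ^ 2 +
          (‖iteratedDerivWithin n h (Ioo (-(1 / 2)) (1 / 2)) (x - 1 / 2)‖₊ : ℝ≥0∞) ^ 2) ∂volume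

/-!
Expand a holomorphic `F` in Taylor series at a point `x` of the half-diagonal `(0, 1/2)`. On the
disk `B(x, x/√2)` the moments of the radial weight `(x² - 2|z - x|²)^(-1/2)` turn `∫ |F|²` into
`π ∑ₙ 2ⁿ/(2n+1)! x²ⁿ⁺¹ |F⁽ⁿ⁾(x)|²`. Integrating over `x`, the sum attached to one corner becomes
`π⁻¹ ∫ |F|² K` with `K(z) = ∫ (x² - 2|z - x|²)^(-1/2) dx`. The quantity under the root is
`2(Re² z - Im² z) - (x - 2 Re z)²`, so arcsine integrals give `K ≤ π` everywhere and `K ≥ π/4`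
on the quarter of the square at that corner. Adding the four corners yields both inequalities.

Conversely, if the sum at a corner is finite, a one-dimensional Sobolev inequality bounds
`|f⁽ⁿ⁾(x)|²` by a constant times `(2n+3)!/(2b²)ⁿ` for every `b < x`. Hence the Taylor series of the
data at `x` converge in `B(x, x/√2)`, and they glue along the half-diagonal to a holomorphic
function on the union of these disks. The four unions so obtained are convex, contain the center
and cover the square, and by hypothesis the four functions agree near the center.
-/

theorem norm_sq_le_setIntegral_norm_sq_add {E : Type*} [NormedAddCommGroup E]
    [InnerProductSpace ℝ E] {f f' : ℝ → E} {a b x : ℝ} (hab : a < b)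
    (hf : ∀ t ∈ Icc a b, HasDerivAt f (f' t) t) (hf' : ContinuousOn f' (Icc a b))
    (hx : x ∈ Icc a b) :
    ‖f x‖ ^ 2 ≤ ((b - a)⁻¹ + 1) * ((∫ t in Icc a b, ‖f t‖ ^ 2) + ∫ t in Icc a b, ‖f' t‖ ^ 2) := by
  have hfc : ContinuousOn f (Icc a b) := fun t ht => (hf t ht).continuousAt.continuousWithinAt
  have hi : IntegrableOn (fun t => ‖f t‖ ^ 2) (Icc a b) := (hfc.norm.pow 2).integrableOn_Icc
  have hi' : IntegrableOn (fun t => ‖f' t‖ ^ 2) (Icc a b) := (hf'.norm.pow 2).integrableOn_Icc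
  obtain ⟨y, hy, hfy⟩ : ∃ y ∈ Icc a b, ‖f y‖ ^ 2 ≤ (b - a)⁻¹ * ∫ t in Icc a b, ‖f t‖ ^ 2 := by
    have h := exists_le_setAverage (μ := volume) (by simp [hab]) (by simp) hi
    simpa [setAverage_eq, Real.volume_real_Icc_of_le hab.le] using h
  have hsub : uIcc y x ⊆ Icc a b := uIcc_subset_Icc hy hx
  have hincr : ‖f x‖ ^ 2 - ‖f y‖ ^ 2 ≤
      (∫ t in Icc a b, ‖f t‖ ^ 2) + ∫ t in Icc a b, ‖f' t‖ ^ 2 := calc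
    _ = ∫ t in y..x, 2 * inner ℝ (f t) (f' t) := by
      refine (intervalIntegral.integral_eq_sub_of_hasDerivAt
        (fun t ht => (hf t (hsub ht)).norm_sq) (ContinuousOn.intervalIntegrable ?_)).symm
      exact (continuousOn_const.mul (hfc.inner hf')).mono hsub
    _ ≤ ∫ t in uIoc y x, ‖f t‖ ^ 2 + ‖f' t‖ ^ 2 := by
      refine (le_abs_self _).trans ?_
      rw [← Real.norm_eq_abs, intervalIntegral.norm_intervalIntegral_eq]
      refine norm_integral_le_of_norm_le ((hi.add hi').mono_set (uIoc_subset_uIcc.trans hsub))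
        (.of_forall fun t => ?_)
      rw [norm_mul, Real.norm_ofNat, Real.norm_eq_abs]
      nlinarith [abs_real_inner_le_norm (f t) (f' t), sq_nonneg (‖f t‖ - ‖f' t‖)]
    _ ≤ ∫ t in Icc a b, ‖f t‖ ^ 2 + ‖f' t‖ ^ 2 :=
      setIntegral_mono_set (hi.add hi') (.of_forall fun t => by positivity)
        (uIoc_subset_uIcc.trans hsub).eventuallyLE
    _ = _ := integral_add hi hi'
  have hnn : 0 ≤ (b - a)⁻¹ * ∫ t in Icc a b, ‖f' t‖ ^ 2 :=
    mul_nonneg (inv_nonneg.2 (sub_nonneg.2 hab.le)) (integral_nonneg fun t => by positivity)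
  linarith

theorem exists_factorial_two_mul_add_three_mul_pow_le {q : ℝ} (hq0 : 0 < q) (hq : q < 1 / 4) :
    ∃ B : ℝ, ∀ n : ℕ, (2 * n + 3).factorial * q ^ n ≤ B * (n.factorial : ℝ) ^ 2 := by
  have hq4 : |4 * q| < 1 := by rw [abs_of_pos (by positivity)]; linarith
  obtain ⟨B, hB⟩ := (tendsto_pow_const_mul_const_pow_of_abs_lt_one 3 hq4).bddAbove_range
  refine ⟨8 * (B / (4 * q) ^ 3), fun n => ?_⟩
  have hfact : (2 * n + 3).factorial ≤
      2 ^ (2 * n + 3) * n.factorial * (n.factorial * (n + 3) ^ 3) := by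
    rw [← Nat.choose_mul_factorial_mul_factorial (show n ≤ 2 * n + 3 by lia),
      show 2 * n + 3 - n = n + 3 by lia, ← Nat.factorial_mul_ascFactorial n 3]
    gcongr
    · exact Nat.choose_le_two_pow _ _
    · exact Nat.ascFactorial_le_pow_add n 3
  calc ((2 * n + 3).factorial : ℝ) * q ^ n
      ≤ 2 ^ (2 * n + 3) * n.factorial * (n.factorial * (n + 3) ^ 3) * q ^ n := by
        gcongr; exact_mod_cast hfact
    _ = 8 * ((((n + 3 : ℕ) : ℝ) ^ 3 * (4 * q) ^ (n + 3)) / (4 * q) ^ 3) *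
          (n.factorial : ℝ) ^ 2 := by
        push_cast
        rw [pow_add (4 * q), pow_add 2, pow_mul, mul_pow 4 q n]
        field_simp
        norm_num
    _ ≤ _ := by gcongr; exact hB ⟨n + 3, rfl⟩

theorem hasDerivAt_iteratedDeriv_of_contDiffOn {𝕜 E : Type*} [NontriviallyNormedField 𝕜]
    [NormedAddCommGroup E] [NormedSpace 𝕜 E] {f : 𝕜 → E} {s : Set 𝕜} {x : 𝕜}
    (hf : ContDiffOn 𝕜 (⊤ : ℕ∞) f s) (hs : IsOpen s) (hx : x ∈ s) (n : ℕ) :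
    HasDerivAt (iteratedDeriv n f) (iteratedDeriv (n + 1) f x) x := by
  have hd : DifferentiableOn 𝕜 (iteratedDerivWithin n f s) s :=
    hf.differentiableOn_iteratedDerivWithin (by exact_mod_cast WithTop.coe_lt_top n)
      hs.uniqueDiffOn
  rw [iteratedDeriv_succ]
  exact ((hd.congr (iteratedDerivWithin_of_isOpen hs).symm).differentiableAt
    (hs.mem_nhds hx)).hasDerivAt

theorem continuousOn_iteratedDeriv_of_contDiffOn {𝕜 E : Type*} [NontriviallyNormedField 𝕜]
    [NormedAddCommGroup E] [NormedSpace 𝕜 E] {f : 𝕜 → E} {s : Set 𝕜}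
    (hf : ContDiffOn 𝕜 (⊤ : ℕ∞) f s) (hs : IsOpen s) (n : ℕ) :
    ContinuousOn (iteratedDeriv n f) s := fun _ hx =>
  (hasDerivAt_iteratedDeriv_of_contDiffOn hf hs hx n).continuousAt.continuousWithinAt

/-- The weighted sum `∑ₙ 2ⁿ/(2n+1)! ∫₀ᵃ x²ⁿ⁺¹ |f⁽ⁿ⁾(x)|² dx` attached to a corner of the square,
where `f` is the restriction of the sought function to the diagonal issuing from that corner. -/
noncomputable def cornerSum (a : ℝ) (f : ℝ → ℂ) : ℝ≥0∞ :=
  ∑' n : ℕ, ENNReal.ofReal (2 ^ n / (2 * n + 1).factorial) *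
    ∫⁻ x in Ioo 0 a, ENNReal.ofReal (x ^ (2 * n + 1)) * ‖iteratedDeriv n f x‖ₑ ^ 2

theorem cornerSum_congr {f₁ f₂ : ℝ → ℂ} {a : ℝ} (h : EqOn f₁ f₂ (Ioo 0 a)) :
    cornerSum a f₁ = cornerSum a f₂ := by
  refine tsum_congr fun n => congrArg _ (setLIntegral_congr_fun measurableSet_Ioo fun x hx => ?_)
  simp only [(h.eventuallyEq_of_mem (isOpen_Ioo.mem_nhds hx)).iteratedDeriv_eq n]

theorem aemeasurable_pow_mul_enorm_iteratedDeriv_sq {f : ℝ → ℂ} {a : ℝ}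
    (hf : ContDiffOn ℝ (⊤ : ℕ∞) f (Ioo 0 a)) (n : ℕ) :
    AEMeasurable (fun x => ENNReal.ofReal (x ^ (2 * n + 1)) * ‖iteratedDeriv n f x‖ₑ ^ 2)
      (volume.restrict (Ioo 0 a)) :=
  have hcont := continuousOn_iteratedDeriv_of_contDiffOn hf isOpen_Ioo n
  (by fun_prop : Measurable fun x : ℝ => ENNReal.ofReal (x ^ (2 * n + 1))).aemeasurable.mul
    ((hcont.aemeasurable measurableSet_Ioo).enorm.pow_const 2)

theorem cornerSum_eq_lintegral_tsum {f : ℝ → ℂ} {a : ℝ}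
    (hf : ContDiffOn ℝ (⊤ : ℕ∞) f (Ioo 0 a)) :
    cornerSum a f = ∫⁻ x in Ioo 0 a, ∑' n : ℕ, ENNReal.ofReal (2 ^ n / (2 * n + 1).factorial) *
      (ENNReal.ofReal (x ^ (2 * n + 1)) * ‖iteratedDeriv n f x‖ₑ ^ 2) := by
  rw [lintegral_tsum fun n => (aemeasurable_pow_mul_enorm_iteratedDeriv_sq hf n).const_mul _]
  exact tsum_congr fun n => (lintegral_const_mul' _ _ ENNReal.ofReal_ne_top).symm

theorem setIntegral_norm_iteratedDeriv_sq_le {f : ℝ → ℂ} {n : ℕ} {a b c : ℝ}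
    (hS : cornerSum a f ≠ ∞) (hb : 0 < b) (hc : c < a)
    (hf : ContinuousOn (iteratedDeriv n f) (Icc b c)) :
    ∫ t in Icc b c, ‖iteratedDeriv n f t‖ ^ 2 ≤
      (cornerSum a f).toReal * ((2 * n + 1).factorial / (2 ^ n * b ^ (2 * n + 1))) := by
  set k : ℝ := 2 ^ n / (2 * n + 1).factorial with hk
  have hkb : 0 < k * b ^ (2 * n + 1) := by positivity
  have hle : ENNReal.ofReal (∫ t in Icc b c, k * b ^ (2 * n + 1) * ‖iteratedDeriv n f t‖ ^ 2) ≤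
      cornerSum a f := calc
    _ = ∫⁻ t in Icc b c, ENNReal.ofReal (k * b ^ (2 * n + 1) * ‖iteratedDeriv n f t‖ ^ 2) :=
      ofReal_integral_eq_lintegral_ofReal ((hf.norm.pow 2).integrableOn_Icc.const_mul _)
        (.of_forall fun t => by positivity)
    _ ≤ ∫⁻ t in Icc b c, ENNReal.ofReal k *
          (ENNReal.ofReal (t ^ (2 * n + 1)) * ‖iteratedDeriv n f t‖ₑ ^ 2) := by
      refine setLIntegral_mono' measurableSet_Icc fun t ht => ?_
      rw [← ofReal_norm, ← ENNReal.ofReal_pow (norm_nonneg _), ← mul_assoc,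
        ← ENNReal.ofReal_mul (by positivity),
        ← ENNReal.ofReal_mul (mul_nonneg (by positivity) (pow_nonneg (hb.le.trans ht.1) _))]
      gcongr
      exact ht.1
    _ ≤ ∫⁻ t in Ioo 0 a, ENNReal.ofReal k *
          (ENNReal.ofReal (t ^ (2 * n + 1)) * ‖iteratedDeriv n f t‖ₑ ^ 2) :=
      lintegral_mono_set (Icc_subset_Ioo hb hc)
    _ ≤ cornerSum a f := by
      rw [lintegral_const_mul' _ _ ENNReal.ofReal_ne_top]
      exact ENNReal.le_tsum n
  rw [ENNReal.ofReal_le_iff_le_toReal hS, integral_const_mul] at hle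
  calc ∫ t in Icc b c, ‖iteratedDeriv n f t‖ ^ 2
      ≤ (cornerSum a f).toReal / (k * b ^ (2 * n + 1)) := (le_div_iff₀' hkb).2 hle
    _ = _ := by rw [hk]; field_simp

/-- The Cauchy estimates `|f⁽ⁿ⁾(y)| ≤ C n!/ρⁿ` hold uniformly for `y` near `x`. -/
def CauchyBoundAt (f : ℝ → ℂ) (x ρ : ℝ) : Prop :=
  ∃ C : ℝ, ∀ᶠ y in nhds x, ∀ n : ℕ, ‖iteratedDeriv n f y‖ * ρ ^ n ≤ C * n.factorial

theorem exists_norm_iteratedDeriv_sq_le {f : ℝ → ℂ} {a b c : ℝ}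
    (hf : ContDiffOn ℝ (⊤ : ℕ∞) f (Ioo 0 a)) (hS : cornerSum a f ≠ ∞)
    (hb : 0 < b) (hbc : b < c) (hc : c < a) :
    ∃ K : ℝ, 0 ≤ K ∧ ∀ y ∈ Icc b c, ∀ n : ℕ,
      ‖iteratedDeriv n f y‖ ^ 2 ≤ K * ((2 * n + 3).factorial / (2 * b ^ 2) ^ n) := by
  have hderiv (n : ℕ) (t : ℝ) (ht : t ∈ Icc b c) :=
    hasDerivAt_iteratedDeriv_of_contDiffOn hf isOpen_Ioo (Icc_subset_Ioo hb hc ht) n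
  have hcont (n : ℕ) : ContinuousOn (iteratedDeriv n f) (Icc b c) :=
    (continuousOn_iteratedDeriv_of_contDiffOn hf isOpen_Ioo n).mono (Icc_subset_Ioo hb hc)
  have : 0 < c - b := sub_pos.2 hbc
  refine ⟨((c - b)⁻¹ + 1) * (cornerSum a f).toReal * (b⁻¹ + (2 * b ^ 3)⁻¹), by positivity,
    fun y hy n => ?_⟩
  have hterm : ((2 * n + 1).factorial / (2 ^ n * b ^ (2 * n + 1)) : ℝ) ≤
      b⁻¹ * ((2 * n + 3).factorial / (2 * b ^ 2) ^ n) := calc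
    _ = b⁻¹ * ((2 * n + 1).factorial / (2 * b ^ 2) ^ n) := by
      rw [mul_pow, ← pow_mul, pow_succ]; field_simp
    _ ≤ _ := by gcongr; lia
  have hterm' : ((2 * (n + 1) + 1).factorial / (2 ^ (n + 1) * b ^ (2 * (n + 1) + 1)) : ℝ) =
      (2 * b ^ 3)⁻¹ * ((2 * n + 3).factorial / (2 * b ^ 2) ^ n) := by
    rw [show 2 * (n + 1) + 1 = 2 * n + 3 by ring, pow_add b, pow_mul, mul_pow]
    field_simp
    rw [mul_comm, pow_succ]
  calc ‖iteratedDeriv n f y‖ ^ 2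
      ≤ ((c - b)⁻¹ + 1) * ((∫ t in Icc b c, ‖iteratedDeriv n f t‖ ^ 2) +
          ∫ t in Icc b c, ‖iteratedDeriv (n + 1) f t‖ ^ 2) :=
        norm_sq_le_setIntegral_norm_sq_add hbc (hderiv n) (hcont (n + 1)) hy
    _ ≤ ((c - b)⁻¹ + 1) * ((cornerSum a f).toReal *
            (b⁻¹ * ((2 * n + 3).factorial / (2 * b ^ 2) ^ n)) +
          (cornerSum a f).toReal *
            ((2 * b ^ 3)⁻¹ * ((2 * n + 3).factorial / (2 * b ^ 2) ^ n))) := by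
        gcongr
        · exact (setIntegral_norm_iteratedDeriv_sq_le hS hb hc (hcont n)).trans (by gcongr)
        · exact (setIntegral_norm_iteratedDeriv_sq_le hS hb hc (hcont (n + 1))).trans_eq
            (by rw [hterm'])
    _ = _ := by ring

theorem cauchyBoundAt_of_cornerSum_ne_top {f : ℝ → ℂ} {a x ρ : ℝ}
    (hf : ContDiffOn ℝ (⊤ : ℕ∞) f (Ioo 0 a)) (hS : cornerSum a f ≠ ∞) (hx : x ∈ Ioo 0 a)
    (hρ0 : 0 < ρ) (hρ : ρ < x / √2) : CauchyBoundAt f x ρ := by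
  obtain ⟨b, hρb, hbx⟩ := exists_between ((lt_div_iff₀ (by positivity)).1 hρ)
  obtain ⟨c, hxc, hca⟩ := exists_between hx.2
  have hb0 : 0 < b := lt_trans (by positivity) hρb
  obtain ⟨K, hK0, hK⟩ := exists_norm_iteratedDeriv_sq_le hf hS hb0 (hbx.trans hxc) hca
  have hq : ρ ^ 2 / (2 * b ^ 2) < 1 / 4 := by
    rw [div_lt_iff₀ (by positivity)]
    have := pow_lt_pow_left₀ hρb (by positivity) two_ne_zero
    rw [mul_pow, Real.sq_sqrt zero_le_two] at this
    linarith
  obtain ⟨B, hB⟩ := exists_factorial_two_mul_add_three_mul_pow_le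
    (div_pos (pow_pos hρ0 2) (by positivity)) hq
  refine ⟨√(K * B), ?_⟩
  filter_upwards [Icc_mem_nhds hbx hxc] with y hy n
  rw [← Real.sqrt_sq (show 0 ≤ (n.factorial : ℝ) by positivity), ← Real.sqrt_mul' _ (by positivity)]
  refine Real.le_sqrt_of_sq_le ?_
  calc (‖iteratedDeriv n f y‖ * ρ ^ n) ^ 2
      = ‖iteratedDeriv n f y‖ ^ 2 * (ρ ^ 2) ^ n := by ring
    _ ≤ K * ((2 * n + 3).factorial / (2 * b ^ 2) ^ n) * (ρ ^ 2) ^ n := by gcongr; exact hK y hy n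
    _ = K * ((2 * n + 3).factorial * (ρ ^ 2 / (2 * b ^ 2)) ^ n) := by rw [div_pow]; ring
    _ ≤ K * (B * (n.factorial : ℝ) ^ 2) := mul_le_mul_of_nonneg_left (hB n) hK0
    _ = _ := by ring

/-! ### Complex Taylor series of a function of a real variable -/

theorem norm_sub_taylor_sum_le {E : Type*} [NormedAddCommGroup E] [NormedSpace ℝ E]
    [CompleteSpace E] {f : ℝ → E} {x h C : ℝ} {n : ℕ}
    (hf : ∀ t ∈ Icc (0 : ℝ) 1, ContDiffAt ℝ (n + 1) f (x + t * h))
    (hC : ∀ t ∈ Icc (0 : ℝ) 1, ‖iteratedDeriv (n + 1) f (x + t * h)‖ ≤ C) :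
    ‖f (x + h) - ∑ k ∈ Finset.range (n + 1), ((k.factorial : ℝ)⁻¹ * h ^ k) • iteratedDeriv k f x‖ ≤
      (n.factorial : ℝ)⁻¹ * (|h| ^ (n + 1) * C) := by
  have htaylor := map_add_eq_sum_add_integral_iteratedFDeriv hf
  simp only [iteratedFDeriv_apply_eq_iteratedDeriv_mul_prod, Finset.prod_const, Finset.card_univ,
    Fintype.card_fin, ← smul_assoc _ (h ^ _), smul_eq_mul (_⁻¹)] at htaylor
  rw [htaylor, add_sub_cancel_left, norm_smul, norm_inv, Real.norm_natCast]
  gcongr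
  refine (intervalIntegral.norm_integral_le_of_norm_le_const
    (C := |h| ^ (n + 1) * C) fun t ht => ?_).trans_eq (by simp)
  rw [uIoc_of_le zero_le_one] at ht
  have ht' : t ∈ Icc (0 : ℝ) 1 := Ioc_subset_Icc_self ht
  have hpow : |1 - t| ^ n ≤ 1 :=
    pow_le_one₀ (abs_nonneg _) (by rw [abs_le]; constructor <;> linarith [ht'.1, ht'.2])
  calc ‖((1 - t) ^ n • h ^ (n + 1)) • iteratedDeriv (n + 1) f (x + t • h)‖
      = |1 - t| ^ n * (|h| ^ (n + 1) * ‖iteratedDeriv (n + 1) f (x + t * h)‖) := by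
        simp [norm_smul, mul_assoc]
    _ ≤ 1 * (|h| ^ (n + 1) * C) := by gcongr; exact hC t ht'
    _ = _ := one_mul _

/-- The sum of the Taylor series at `x` of a function of a real variable, as a function of a
complex variable. -/
noncomputable def taylorExtension (f : ℝ → ℂ) (x : ℝ) (z : ℂ) : ℂ :=
  (FormalMultilinearSeries.ofScalars ℂ fun n => iteratedDeriv n f x / n.factorial).sum (z - x)

namespace CauchyBoundAt

variable {f : ℝ → ℂ} {x ρ : ℝ}

theorem hasFPowerSeriesOnBall (h : CauchyBoundAt f x ρ) (hρ : 0 < ρ) :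
    HasFPowerSeriesOnBall (taylorExtension f x)
      (.ofScalars ℂ fun n => iteratedDeriv n f x / n.factorial) x (ENNReal.ofReal ρ) := by
  obtain ⟨C, hC⟩ := h
  set p : FormalMultilinearSeries ℂ ℂ ℂ := .ofScalars ℂ fun n => iteratedDeriv n f x / n.factorial
  have hradius : ENNReal.ofReal ρ ≤ p.radius := by
    refine p.le_radius_of_bound C fun n => ?_
    have hn := hC.self_of_nhds n
    rw [FormalMultilinearSeries.ofScalars_norm, norm_div, Complex.norm_natCast,
      Real.coe_toNNReal _ hρ.le, div_mul_eq_mul_div]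
    exact (div_le_iff₀ (by positivity)).2 hn
  have hpos : 0 < ENNReal.ofReal ρ := ENNReal.ofReal_pos.2 hρ
  have hp := ((p.hasFPowerSeriesOnBall (hpos.trans_le hradius)).comp_sub (x : ℂ)).mono hpos hradius
  rwa [zero_add] at hp

theorem hasSum_taylorExtension (h : CauchyBoundAt f x ρ) (hρ : 0 < ρ) {z : ℂ}
    (hz : z ∈ ball (x : ℂ) ρ) :
    HasSum (fun n => iteratedDeriv n f x / n.factorial * (z - x) ^ n) (taylorExtension f x z) := by
  rw [← eball_ofReal] at hz
  refine ((h.hasFPowerSeriesOnBall hρ).hasSum_sub hz).congr_fun fun n => ?_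
  simp [mul_comm]

theorem differentiableOn_taylorExtension (h : CauchyBoundAt f x ρ) (hρ : 0 < ρ) :
    DifferentiableOn ℂ (taylorExtension f x) (ball x ρ) := by
  simpa [eball_ofReal] using (h.hasFPowerSeriesOnBall hρ).differentiableOn

theorem eventually_norm_sub_taylor_sum_le {C : ℝ} {s : Set ℝ} (hρ : 0 < ρ)
    (hC : ∀ᶠ y in nhds x, ∀ n : ℕ, ‖iteratedDeriv n f y‖ * ρ ^ n ≤ C * n.factorial)
    (hf : ContDiffOn ℝ (⊤ : ℕ∞) f s) (hs : s ∈ nhds x) :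
    ∀ᶠ y in nhds x, ∀ n : ℕ, ‖f y - ∑ k ∈ Finset.range (n + 1),
      ((k.factorial : ℝ)⁻¹ * (y - x) ^ k) • iteratedDeriv k f x‖ ≤
        C * ((n + 1 : ℕ) * (|y - x| / ρ) ^ (n + 1)) := by
  obtain ⟨ε, hε, hball⟩ := Metric.eventually_nhds_iff_ball.1
    (hC.and (eventually_mem_nhds_iff.2 hs))
  filter_upwards [ball_mem_nhds x hε] with y hy n
  have hseg : ∀ t ∈ Icc (0 : ℝ) 1, x + t * (y - x) ∈ ball x ε := fun t ht => by
    rw [mem_ball, Real.dist_eq, add_sub_cancel_left, abs_mul, abs_of_nonneg ht.1]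
    exact (mul_le_of_le_one_left (abs_nonneg _) ht.2).trans_lt hy
  have hbound := norm_sub_taylor_sum_le (f := f) (x := x) (h := y - x) (n := n)
    (C := C * (n + 1).factorial / ρ ^ (n + 1))
    (fun t ht => (hf.contDiffAt (hball _ (hseg t ht)).2).of_le (by exact_mod_cast le_top))
    (fun t ht => (le_div_iff₀ (by positivity)).2 ((hball _ (hseg t ht)).1 (n + 1)))
  rw [add_sub_cancel] at hbound
  refine hbound.trans_eq ?_
  rw [Nat.factorial_succ, div_pow]
  push_cast
  field_simp

theorem eventually_taylorExtension_eq {s : Set ℝ} (h : CauchyBoundAt f x ρ) (hρ : 0 < ρ)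
    (hf : ContDiffOn ℝ (⊤ : ℕ∞) f s) (hs : s ∈ nhds x) :
    ∀ᶠ y : ℝ in nhds x, taylorExtension f x y = f y := by
  obtain ⟨C, hC⟩ := h
  filter_upwards [eventually_norm_sub_taylor_sum_le hρ hC hf hs, ball_mem_nhds x hρ]
    with y hremainder hy
  have hlim : Filter.Tendsto (fun n : ℕ => C * ((n + 1 : ℕ) * (|y - x| / ρ) ^ (n + 1))) .atTop
      (nhds 0) := by
    have hr : |(|y - x| / ρ)| < 1 := by
      rw [abs_of_nonneg (by positivity), div_lt_one hρ]; exact hy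
    simpa using ((tendsto_self_mul_const_pow_of_abs_lt_one hr).comp
      (Filter.tendsto_add_atTop_nat 1)).const_mul C
  have hsum : HasSum (fun k : ℕ => ((k.factorial : ℝ)⁻¹ * (y - x) ^ k) • iteratedDeriv k f x)
      (taylorExtension f x y) := by
    have hmem : (y : ℂ) ∈ ball (x : ℂ) ρ := by
      simpa [dist_eq_norm, ← Complex.ofReal_sub] using hy
    convert CauchyBoundAt.hasSum_taylorExtension ⟨C, hC⟩ hρ hmem using 2 with k
    simp
    ring
  refine tendsto_nhds_unique ((Filter.tendsto_add_atTop_iff_nat 1).2 hsum.tendsto_sum_nat) ?_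
  exact tendsto_iff_norm_sub_tendsto_zero.2 (squeeze_zero (fun _ => norm_nonneg _)
    (fun n => by rw [norm_sub_rev]; exact hremainder n) hlim)

end CauchyBoundAt

/-! ### Gluing holomorphic functions -/

theorem exists_differentiableOn_iUnion_eqOn {ι 𝕜 E F : Type*} [NontriviallyNormedField 𝕜]
    [NormedAddCommGroup E] [NormedSpace 𝕜 E] [NormedAddCommGroup F] [NormedSpace 𝕜 F]
    {U : ι → Set E} {f : ι → E → F} (hU : ∀ i, IsOpen (U i))
    (hf : ∀ i, DifferentiableOn 𝕜 (f i) (U i)) (h : ∀ i j, EqOn (f i) (f j) (U i ∩ U j)) :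
    ∃ G : E → F, DifferentiableOn 𝕜 G (⋃ i, U i) ∧ ∀ i, EqOn G (f i) (U i) := by
  classical
  let G (z : E) : F := if hz : ∃ i, z ∈ U i then f hz.choose z else 0
  have hG (i : ι) : EqOn G (f i) (U i) := fun z hz => by
    have hex : ∃ i, z ∈ U i := ⟨i, hz⟩
    simp only [G, dif_pos hex]
    exact h _ _ ⟨hex.choose_spec, hz⟩
  exact ⟨G, .iUnion_of_isOpen (fun i => (hf i).congr (hG i)) hU, hG⟩

theorem eventuallyEq_of_frequently_ofReal_eq {f g : ℂ → ℂ} {p : ℝ} (hf : AnalyticAt ℂ f p)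
    (hg : AnalyticAt ℂ g p) (h : ∃ᶠ t : ℝ in nhdsWithin p {p}ᶜ, f t = g t) :
    f =ᶠ[nhds (p : ℂ)] g := by
  refine (hf.frequently_eq_iff_eventually_eq hg).1 (Filter.Tendsto.frequently ?_ h)
  exact Complex.continuous_ofReal.continuousWithinAt.tendsto_nhdsWithin fun t ht => by
    simpa using ht

theorem eqOn_inter_of_eventuallyEq {E : Type*} [NormedAddCommGroup E] [NormedSpace ℂ E]
    [CompleteSpace E] {f g : ℂ → E} {U V : Set ℂ} {p : ℂ} (hU : IsOpen U) (hV : IsOpen V)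
    (hUV : IsPreconnected (U ∩ V)) (hf : DifferentiableOn ℂ f U) (hg : DifferentiableOn ℂ g V)
    (hp : p ∈ U ∩ V) (h : f =ᶠ[nhds p] g) : EqOn f g (U ∩ V) :=
  ((hf.mono inter_subset_left).analyticOnNhd (hU.inter hV)).eqOn_of_preconnected_of_eventuallyEq
    ((hg.mono inter_subset_right).analyticOnNhd (hU.inter hV)) hUV hp h

section RealCenteredBalls

variable {I : Set ℝ} {R : ℝ → ℝ} {f : ℝ → ℂ} {T : ℝ → ℂ → ℂ}

theorem eqOn_real_of_eventually_eq (hI : Convex ℝ I) (hR : ∀ x ∈ I, 0 < R x)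
    (hT : ∀ x ∈ I, DifferentiableOn ℂ (T x) (ball (x : ℂ) (R x)))
    (hTf : ∀ x ∈ I, ∀ᶠ t : ℝ in nhds x, T x t = f t) {x : ℝ} (hx : x ∈ I) :
    EqOn (fun t : ℝ => T x t) f (I ∩ ball x (R x)) := by
  have hanalytic : ∀ y ∈ I, ∀ t ∈ ball y (R y), AnalyticAt ℝ (fun t : ℝ => T y t) t := by
    intro y hy t ht
    have htball : (t : ℂ) ∈ ball (y : ℂ) (R y) := by
      rwa [mem_ball, Complex.isometry_ofReal.dist_eq]
    have hTt : AnalyticAt ℂ (T y) (Complex.ofRealCLM t) :=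
      (hT y hy).analyticAt (isOpen_ball.mem_nhds htball)
    exact hTt.restrictScalars.comp (Complex.ofRealCLM.analyticAt t)
  have hfan : AnalyticOnNhd ℝ f (I ∩ ball x (R x)) := fun t ht =>
    (hanalytic t ht.1 t (mem_ball_self (hR t ht.1))).congr (hTf t ht.1)
  have hTan : AnalyticOnNhd ℝ (fun t : ℝ => T x t) (I ∩ ball x (R x)) :=
    fun t ht => hanalytic x hx t ht.2
  exact hTan.eqOn_of_preconnected_of_eventuallyEq hfan (hI.inter (convex_ball x _)).isPreconnected
    ⟨hx, mem_ball_self (hR x hx)⟩ (hTf x hx)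

theorem exists_mem_inter_ball_of_dist_lt {E : Type*} [NormedAddCommGroup E] [NormedSpace ℝ E]
    {s : Set E} (hs : Convex ℝ s) {x y : E} (hx : x ∈ s) (hy : y ∈ s) {ε δ : ℝ} (hε : 0 < ε)
    (hδ : 0 < δ) (h : dist x y < ε + δ) : ∃ p ∈ s, p ∈ ball x ε ∧ p ∈ ball y δ := by
  set c : ℝ := ε / (ε + δ) with hc
  have hc1 : 1 - c = δ / (ε + δ) := by rw [hc]; field_simp; ring
  refine ⟨AffineMap.lineMap x y c, hs.lineMap_mem hx hy ⟨by positivity, ?_⟩, ?_, ?_⟩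
  · exact sub_nonneg.1 (hc1 ▸ by positivity)
  · rw [mem_ball, dist_lineMap_left, Real.norm_of_nonneg (by positivity), hc, div_mul_comm]
    exact mul_lt_of_lt_one_left hε ((div_lt_one (by positivity)).2 h)
  · rw [mem_ball, dist_lineMap_right, hc1, Real.norm_of_nonneg (by positivity), div_mul_comm]
    exact mul_lt_of_lt_one_left hδ ((div_lt_one (by positivity)).2 h)

theorem exists_differentiableOn_iUnion_ball (hI : Convex ℝ I) (hIo : IsOpen I)
    (hR : ∀ x ∈ I, 0 < R x)
    (hT : ∀ x ∈ I, DifferentiableOn ℂ (T x) (ball (x : ℂ) (R x)))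
    (hTf : ∀ x ∈ I, ∀ᶠ t : ℝ in nhds x, T x t = f t) :
    ∃ G : ℂ → ℂ, DifferentiableOn ℂ G (⋃ x ∈ I, ball (x : ℂ) (R x)) ∧ ∀ x ∈ I, G x = f x := by
  have hTreal : ∀ x ∈ I, EqOn (fun t : ℝ => T x t) f (I ∩ ball x (R x)) :=
    fun x hx => eqOn_real_of_eventually_eq hI hR hT hTf hx
  have hoverlap : ∀ x y : I, EqOn (T x) (T y) (ball (x : ℂ) (R x) ∩ ball (y : ℂ) (R y)) := by
    rintro ⟨x, hx⟩ ⟨y, hy⟩ z hz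
    have hxy : dist x y < R x + R y := by
      rw [← Complex.isometry_ofReal.dist_eq]
      exact (dist_triangle_right _ _ z).trans_lt (add_lt_add (mem_ball'.1 hz.1) (mem_ball'.1 hz.2))
    obtain ⟨p, hpI, hpx, hpy⟩ := exists_mem_inter_ball_of_dist_lt hI hx hy (hR x hx) (hR y hy) hxy
    have hp : (p : ℂ) ∈ ball (x : ℂ) (R x) ∩ ball (y : ℂ) (R y) := by
      simpa only [mem_inter_iff, mem_ball, Complex.isometry_ofReal.dist_eq] using ⟨hpx, hpy⟩
    refine eqOn_inter_of_eventuallyEq isOpen_ball isOpen_ball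
      ((convex_ball _ _).inter (convex_ball _ _)).isPreconnected (hT x hx) (hT y hy) hp
      (eventuallyEq_of_frequently_ofReal_eq ((hT x hx).analyticAt (isOpen_ball.mem_nhds hp.1))
        ((hT y hy).analyticAt (isOpen_ball.mem_nhds hp.2))
        (Filter.Eventually.frequently (Filter.Eventually.filter_mono nhdsWithin_le_nhds ?_))) hz
    filter_upwards [hIo.mem_nhds hpI, isOpen_ball.mem_nhds hpx, isOpen_ball.mem_nhds hpy]
      with t htI htx hty
    exact (hTreal x hx ⟨htI, htx⟩).trans (hTreal y hy ⟨htI, hty⟩).symm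
  obtain ⟨G, hGd, hG⟩ := exists_differentiableOn_iUnion_eqOn (𝕜 := ℂ)
    (U := fun x : I => ball (x : ℂ) (R x)) (f := fun x : I => T x) (fun _ => isOpen_ball)
    (fun x => hT x x.2) hoverlap
  refine ⟨G, by rwa [biUnion_eq_iUnion], fun x hx => ?_⟩
  exact (hG ⟨x, hx⟩ (mem_ball_self (hR x hx))).trans (hTf x hx).self_of_nhds

end RealCenteredBalls

/-! ### The cone at a corner -/

/-- The union of the disks `B(x, x/√2)`, `0 < x < a`: the Taylor series of `f` at `x` converges in
`B(x, x/√2)` as soon as `cornerSum a f` is finite. -/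
def cornerCone (a : ℝ) : Set ℂ :=
  ⋃ x ∈ Ioo (0 : ℝ) a, ball (x : ℂ) (x / √2)

theorem isOpen_cornerCone (a : ℝ) : IsOpen (cornerCone a) :=
  isOpen_biUnion fun _ _ => isOpen_ball

theorem ball_subset_cornerCone {a x : ℝ} (hx : x ∈ Ioo 0 a) :
    ball (x : ℂ) (x / √2) ⊆ cornerCone a :=
  subset_biUnion_of_mem (u := fun x : ℝ => ball (x : ℂ) (x / √2)) hx

theorem convex_cornerCone (a : ℝ) : Convex ℝ (cornerCone a) := by
  intro z hz w hw s t hs ht hst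
  simp only [cornerCone, mem_iUnion₂, mem_ball, dist_eq_norm] at hz hw ⊢
  obtain ⟨x, hx, hzx⟩ := hz
  obtain ⟨y, hy, hwy⟩ := hw
  refine ⟨s * x + t * y, convex_Ioo 0 a hx hy hs ht hst, ?_⟩
  calc ‖s • z + t • w - ((s * x + t * y : ℝ) : ℂ)‖ = ‖s • (z - x) + t • (w - y)‖ := by
        simp only [Complex.real_smul]; push_cast; ring_nf
    _ ≤ ‖s • (z - x)‖ + ‖t • (w - y)‖ := norm_add_le _ _
    _ = s * ‖z - x‖ + t * ‖w - y‖ := by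
        rw [norm_smul, norm_smul, Real.norm_of_nonneg hs, Real.norm_of_nonneg ht]
    _ < s * (x / √2) + t * (y / √2) := by
        rcases hs.eq_or_lt with rfl | hs
        · rw [zero_add] at hst; subst hst; simpa using hwy
        · exact add_lt_add_of_lt_of_le (by gcongr) (by gcongr)
    _ = (s * x + t * y) / √2 := by ring

theorem ofReal_mem_cornerCone {a x : ℝ} (hx : x ∈ Ioc 0 a) : (x : ℂ) ∈ cornerCone a := by
  obtain ⟨hx0, hxa⟩ := hx
  refine ball_subset_cornerCone (x := 3 / 4 * x) ⟨by positivity, by linarith⟩ ?_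
  rw [mem_ball, Complex.isometry_ofReal.dist_eq, Real.dist_eq, lt_div_iff₀ (by positivity),
    abs_of_pos (by linarith)]
  nlinarith [Real.sqrt_two_lt_three_halves]

theorem exists_differentiableOn_cornerCone {f : ℝ → ℂ} {a : ℝ}
    (hf : ContDiffOn ℝ (⊤ : ℕ∞) f (Ioo 0 a)) (hS : cornerSum a f ≠ ∞) :
    ∃ G : ℂ → ℂ, DifferentiableOn ℂ G (cornerCone a) ∧ ∀ x ∈ Ioo 0 a, G x = f x := by
  have hcauchy {x ρ : ℝ} (hx : x ∈ Ioo 0 a) (hρ0 : 0 < ρ) (hρ : ρ < x / √2) :=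
    cauchyBoundAt_of_cornerSum_ne_top hf hS hx hρ0 hρ
  have hR : ∀ x ∈ Ioo 0 a, 0 < x / √2 := fun x hx => div_pos hx.1 (by positivity)
  refine exists_differentiableOn_iUnion_ball (T := taylorExtension f) (convex_Ioo 0 a) isOpen_Ioo
    hR (fun x hx z hz => ?_) fun x hx => ?_
  · obtain ⟨ρ, hzρ, hρ⟩ := exists_between (mem_ball.1 hz)
    have hρ0 : 0 < ρ := dist_nonneg.trans_lt hzρ
    exact (((hcauchy hx hρ0 hρ).differentiableOn_taylorExtension hρ0).differentiableAt
      (isOpen_ball.mem_nhds hzρ)).differentiableWithinAt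
  · obtain ⟨ρ, hρ0, hρ⟩ := exists_between (hR x hx)
    exact (hcauchy hx hρ0 hρ).eventually_taylorExtension_eq hρ0 hf (isOpen_Ioo.mem_nhds hx)

/-! ### Arcsine integrals -/

theorem setLIntegral_mul_inv_sqrt_sq_sub_sq {R α β : ℝ} (hR : 0 < R) (hα : 0 ≤ α)
    (hαβ : α ≤ β) (hβ : β ≤ Real.pi) (c : ℝ) (φ : ℝ → ℝ≥0∞) :
    ∫⁻ x in Ioo (c + R * Real.cos β) (c + R * Real.cos α),
        φ x * ENNReal.ofReal (√(R ^ 2 - (x - c) ^ 2))⁻¹ =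
      ∫⁻ θ in Ioo α β, φ (c + R * Real.cos θ) := by
  have hanti : StrictAntiOn (fun θ => c + R * Real.cos θ) (Icc α β) := fun θ hθ η hη hlt => by
    have hcos := Real.strictAntiOn_cos ⟨hα.trans hθ.1, hθ.2.trans hβ⟩
      ⟨hα.trans hη.1, hη.2.trans hβ⟩ hlt
    dsimp only
    gcongr
  have himage : (fun θ => c + R * Real.cos θ) '' Ioo α β =
      Ioo (c + R * Real.cos β) (c + R * Real.cos α) :=
    ContinuousOn.image_Ioo_of_strictAntiOn hαβ (by fun_prop) hanti
  rw [← himage, lintegral_image_eq_lintegral_deriv_mul_of_antitoneOn measurableSet_Ioo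
    (fun θ _ => (((Real.hasDerivAt_cos θ).const_mul R).const_add c).hasDerivWithinAt)
    (hanti.antitoneOn.mono Ioo_subset_Icc_self)]
  refine setLIntegral_congr_fun measurableSet_Ioo fun θ hθ => ?_
  have hsin : 0 < R * Real.sin θ :=
    mul_pos hR (Real.sin_pos_of_pos_of_lt_pi (hα.trans_lt hθ.1) (hθ.2.trans_le hβ))
  have hsqrt : √(R ^ 2 - (c + R * Real.cos θ - c) ^ 2) = R * Real.sin θ := by
    rw [← Real.sqrt_sq hsin.le, mul_pow, Real.sin_sq]; ring_nf
  simp only [mul_neg, neg_neg, hsqrt]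
  rw [mul_left_comm, ← ENNReal.ofReal_mul hsin.le, mul_inv_cancel₀ hsin.ne', ENNReal.ofReal_one,
    mul_one]

theorem integral_cos_pow_odd_zero_pi_div_two (n : ℕ) :
    ∫ θ in 0..Real.pi / 2, Real.cos θ ^ (2 * n + 1) =
      4 ^ n * (n.factorial : ℝ) ^ 2 / (2 * n + 1).factorial := by
  rw [EulerSine.integral_cos_pow_eq, integral_sin_pow_odd, ← mul_assoc,
    one_div_mul_cancel two_ne_zero, one_mul]
  induction n with
  | zero => simp
  | succ n ih =>
    rw [Finset.prod_range_succ, ih, show 2 * (n + 1) + 1 = 2 * n + 1 + 1 + 1 by ring]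
    simp only [Nat.factorial_succ]
    push_cast
    field_simp
    ring

theorem setLIntegral_pow_mul_inv_sqrt_sq_sub_sq {R : ℝ} (hR : 0 < R) (n : ℕ) :
    ∫⁻ r in Ioo 0 R, ENNReal.ofReal (r ^ (2 * n + 1)) * ENNReal.ofReal (√(R ^ 2 - r ^ 2))⁻¹ =
      ENNReal.ofReal (R ^ (2 * n + 1) * (4 ^ n * n.factorial ^ 2 / (2 * n + 1).factorial)) := by
  have hsubst := setLIntegral_mul_inv_sqrt_sq_sub_sq hR le_rfl (by positivity)
    (half_le_self Real.pi_pos.le) 0 fun r => ENNReal.ofReal (r ^ (2 * n + 1))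
  simp only [Real.cos_pi_div_two, mul_zero, Real.cos_zero, mul_one, zero_add, sub_zero] at hsubst
  rw [hsubst, ← integral_cos_pow_odd_zero_pi_div_two, ← intervalIntegral.integral_const_mul,
    intervalIntegral.integral_of_le (by positivity), integral_Ioc_eq_integral_Ioo,
    ofReal_integral_eq_lintegral_ofReal]
  · simp only [mul_pow]
  · exact (Continuous.integrableOn_Icc (by fun_prop)).mono_set Ioo_subset_Icc_self
  · refine (ae_restrict_iff' measurableSet_Ioo).2 (.of_forall fun θ hθ => ?_)
    have := Real.cos_pos_of_mem_Ioo ⟨by linarith [hθ.1, Real.pi_pos], hθ.2⟩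
    positivity

theorem lintegral_inv_sqrt_sq_sub_sq {R : ℝ} (hR : 0 < R) (c : ℝ) :
    ∫⁻ x : ℝ, ENNReal.ofReal (√(R ^ 2 - (x - c) ^ 2))⁻¹ = ENNReal.ofReal Real.pi := by
  have hsubst := setLIntegral_mul_inv_sqrt_sq_sub_sq hR le_rfl Real.pi_pos.le le_rfl c 1
  simp only [Real.cos_pi, Real.cos_zero, Pi.one_apply, one_mul, mul_neg, mul_one, lintegral_one,
    Measure.restrict_apply_univ, Real.volume_Ioo, sub_zero] at hsubst
  rw [← hsubst]
  refine (setLIntegral_eq_of_support_subset fun x hx => ?_).symm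
  have hpos : 0 < R ^ 2 - (x - c) ^ 2 := by
    by_contra! hle
    exact hx (by simp [Real.sqrt_eq_zero_of_nonpos hle])
  obtain ⟨hlower, hupper⟩ := abs_lt.1 (abs_lt_of_sq_lt_sq (sub_pos.1 hpos) hR.le)
  exact ⟨by linarith, by linarith⟩

/-! ### Taylor coefficients and radial weights on disks -/

theorem iteratedDeriv_comp_ofReal_of_differentiableOn {G : ℂ → ℂ} {U : Set ℂ}
    (hG : DifferentiableOn ℂ G U) (hU : IsOpen U) (n : ℕ) {x : ℝ} (hx : (x : ℂ) ∈ U) :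
    iteratedDeriv n (fun t : ℝ => G t) x = iteratedDeriv n G x := by
  induction n generalizing x with
  | zero => simp
  | succ n ih =>
    have hnear : iteratedDeriv n (fun t : ℝ => G t) =ᶠ[nhds x] fun t => iteratedDeriv n G t :=
      (Complex.continuous_ofReal.continuousAt.eventually_mem (hU.mem_nhds hx)).mono fun _ => ih
    rw [iteratedDeriv_succ, hnear.deriv_eq]
    exact (hasDerivAt_iteratedDeriv_of_contDiffOn (hG.contDiffOn hU) hU hx n).comp_ofReal.deriv

theorem fourierCoeffOn_comp_circleMap (f : ℂ → ℂ) (c : ℂ) {r : ℝ} (hr : 0 < r) (n : ℤ) :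
    fourierCoeffOn Real.two_pi_pos (fun θ => f (circleMap c r θ)) n =
      (2 * Real.pi * Complex.I)⁻¹ * r ^ n * ∮ z in C(c, r), (z - c) ^ (-n - 1) * f z := by
  have hr' : (r : ℂ) ≠ 0 := Complex.ofReal_ne_zero.2 hr.ne'
  rw [fourierCoeffOn_eq_integral, circleIntegral, ← intervalIntegral.integral_const_mul,
    Complex.real_smul, ← intervalIntegral.integral_const_mul]
  refine intervalIntegral.integral_congr fun θ _ => ?_
  have hexp : Complex.exp (2 * Real.pi * Complex.I * (-n : ℤ) * θ / (2 * Real.pi - 0 : ℝ)) =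
      Complex.exp (θ * Complex.I) ^ (-n) := by
    rw [← Complex.exp_int_mul]
    congr 1
    push_cast
    field_simp
    ring
  rw [fourier_coe_apply, hexp]
  simp only [deriv_circleMap, circleMap_sub_center, circleMap_zero, smul_eq_mul, mul_zpow,
    zpow_sub₀ hr', zpow_sub₀ (Complex.exp_ne_zero _), zpow_neg, zpow_one]
  push_cast
  field_simp [Complex.exp_ne_zero]
  simp

theorem fourierCoeffOn_comp_circleMap_natCast {G : ℂ → ℂ} {c : ℂ} {r : ℝ} (hr : 0 < r)
    (hG : DifferentiableOn ℂ G (closedBall c r)) (n : ℕ) :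
    fourierCoeffOn Real.two_pi_pos (fun θ => G (circleMap c r θ)) n =
      iteratedDeriv n G c / n.factorial * r ^ n := by
  have hcauchy := hG.circleIntegral_one_div_sub_center_pow_smul hr n
  simp only [one_div, smul_eq_mul] at hcauchy
  rw [fourierCoeffOn_comp_circleMap G c hr, zpow_natCast, ← neg_add', ← Nat.cast_succ]
  simp only [zpow_neg, zpow_natCast]
  rw [hcauchy]
  field_simp [Complex.I_ne_zero]

theorem fourierCoeffOn_comp_circleMap_of_neg {G : ℂ → ℂ} {c : ℂ} {r : ℝ} (hr : 0 < r)
    (hG : DifferentiableOn ℂ G (closedBall c r)) {n : ℤ} (hn : n < 0) :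
    fourierCoeffOn Real.two_pi_pos (fun θ => G (circleMap c r θ)) n = 0 := by
  obtain ⟨k, hk⟩ := Int.eq_ofNat_of_zero_le (show 0 ≤ -n - 1 by lia)
  have hpow : DifferentiableOn ℂ (fun z => (z - c) ^ k * G z) (closedBall c r) := by fun_prop
  rw [fourierCoeffOn_comp_circleMap G c hr, hk]
  simp only [zpow_natCast]
  rw [hpow.diffContOnCl_ball subset_rfl |>.circleIntegral_eq_zero hr.le, mul_zero]

theorem continuous_comp_circleMap {E : Type*} [TopologicalSpace E] {f : ℂ → E} {c : ℂ} {r : ℝ}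
    (hr : 0 ≤ r) (hf : ContinuousOn f (closedBall c r)) :
    Continuous fun θ => f (circleMap c r θ) :=
  hf.comp_continuous (continuous_circleMap c r) (circleMap_mem_closedBall c hr)

theorem hasSum_norm_iteratedDeriv_sq {G : ℂ → ℂ} {c : ℂ} {r : ℝ} (hr : 0 < r)
    (hG : DifferentiableOn ℂ G (closedBall c r)) :
    HasSum (fun n : ℕ => ‖iteratedDeriv n G c / n.factorial‖ ^ 2 * r ^ (2 * n))
      ((2 * Real.pi)⁻¹ * ∫ θ in 0..2 * Real.pi, ‖G (circleMap c r θ)‖ ^ 2) := by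
  have hcont := continuous_comp_circleMap hr.le hG.continuousOn
  have hparseval := hasSum_sq_fourierCoeffOn (f := fun θ => G (circleMap c r θ)) Real.two_pi_pos
    ((memLp_two_iff_integrable_sq_norm hcont.aestronglyMeasurable).2
      (hcont.norm.pow 2).integrableOn_Ioc)
  rw [sub_zero, smul_eq_mul, ← Function.Injective.hasSum_iff Nat.cast_injective] at hparseval
  · refine hparseval.congr_fun fun n => ?_
    simp [fourierCoeffOn_comp_circleMap_natCast hr hG, mul_pow, pow_mul', abs_of_pos hr]
  · intro n hn
    rw [fourierCoeffOn_comp_circleMap_of_neg hr hG, norm_zero, zero_pow two_ne_zero]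
    contrapose! hn
    exact ⟨n.toNat, Int.toNat_of_nonneg hn⟩

theorem measurable_indicator_of_continuousOn {α β : Type*} [TopologicalSpace α] [MeasurableSpace α]
    [OpensMeasurableSpace α] [TopologicalSpace β] [MeasurableSpace β] [BorelSpace β] [Zero β]
    {f : α → β} {s : Set α} (hf : ContinuousOn f s) (hs : MeasurableSet s) :
    Measurable (s.indicator f) := by
  classical
  rw [← piecewise_eq_indicator]
  exact hf.measurable_piecewise continuousOn_const hs

theorem lintegral_eq_lintegral_circleMap {f : ℂ → ℝ≥0∞} (hf : Measurable f) (c : ℂ) :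
    ∫⁻ z, f z = ∫⁻ r in Ioi (0 : ℝ), ENNReal.ofReal r *
      ∫⁻ θ in Ioo (-Real.pi) Real.pi, f (circleMap c r θ) := by
  have hmeas : Measurable fun p : ℝ × ℝ => ENNReal.ofReal p.1 * f (circleMap c p.1 p.2) := by
    simp only [circleMap]; fun_prop
  calc ∫⁻ z, f z = ∫⁻ z, f (c + z) := (lintegral_add_left_eq_self f c).symm
    _ = ∫⁻ p in Ioi (0 : ℝ) ×ˢ Ioo (-Real.pi) Real.pi,
          ENNReal.ofReal p.1 * f (circleMap c p.1 p.2) := by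
        rw [← Complex.lintegral_comp_polarCoord_symm, polarCoord_target]
        refine setLIntegral_congr_fun (measurableSet_Ioi.prod measurableSet_Ioo) fun p _ => ?_
        simp [circleMap, Complex.polarCoord_symm_apply, Complex.exp_mul_I]
    _ = _ := by
        rw [Measure.volume_eq_prod, ← Measure.prod_restrict, lintegral_prod _ hmeas.aemeasurable]
        exact lintegral_congr fun r => lintegral_const_mul (ENNReal.ofReal r)
          (f := fun θ => f (circleMap c r θ)) (hf.comp (measurable_circleMap c r))

theorem lintegral_enorm_sq_circleMap {G : ℂ → ℂ} {c : ℂ} {r : ℝ} (hr : 0 < r)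
    (hG : DifferentiableOn ℂ G (closedBall c r)) :
    ∫⁻ θ in Ioo (-Real.pi) Real.pi, ‖G (circleMap c r θ)‖ₑ ^ 2 =
      ∑' n : ℕ, ENNReal.ofReal (2 * Real.pi * ‖iteratedDeriv n G c / n.factorial‖ ^ 2 *
        r ^ (2 * n)) := by
  have hcont : Continuous fun θ => ‖G (circleMap c r θ)‖ ^ 2 :=
    (continuous_comp_circleMap hr.le hG.continuousOn).norm.pow 2
  have hperiodic : Function.Periodic (fun θ => ‖G (circleMap c r θ)‖ ^ 2) (2 * Real.pi) :=
    (periodic_circleMap c r).comp fun z => ‖G z‖ ^ 2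
  have hshift := hperiodic.intervalIntegral_add_eq (-Real.pi) 0
  rw [zero_add, show -Real.pi + 2 * Real.pi = Real.pi by ring] at hshift
  have hsum := (hasSum_norm_iteratedDeriv_sq hr hG).mul_left (2 * Real.pi)
  rw [mul_inv_cancel_left₀ Real.two_pi_pos.ne', ← hshift,
    intervalIntegral.integral_of_le (by linarith [Real.pi_pos]),
    integral_Ioc_eq_integral_Ioo] at hsum
  simp_rw [mul_assoc (2 * Real.pi)]
  rw [← ENNReal.ofReal_tsum_of_nonneg (fun n => by positivity) hsum.summable, hsum.tsum_eq,
    ofReal_integral_eq_lintegral_ofReal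
      (hcont.integrableOn_Icc.mono_set Ioo_subset_Icc_self)
      (.of_forall fun θ => by positivity)]
  refine lintegral_congr fun θ => ?_
  rw [ENNReal.ofReal_pow (norm_nonneg _), ofReal_norm]

theorem setLIntegral_ball_enorm_sq_mul {G : ℂ → ℂ} {c : ℂ} {R : ℝ}
    (hG : DifferentiableOn ℂ G (ball c R)) {φ : ℝ → ℝ≥0∞} (hφ : Measurable φ) :
    ∫⁻ z in ball c R, ‖G z‖ₑ ^ 2 * φ ‖z - c‖ =
      ∑' n : ℕ, ENNReal.ofReal (2 * Real.pi * ‖iteratedDeriv n G c / n.factorial‖ ^ 2) *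
        ∫⁻ r in Ioo 0 R, ENNReal.ofReal (r ^ (2 * n + 1)) * φ r := by
  have hmeas : Measurable ((ball c R).indicator fun z => ‖G z‖ₑ ^ 2 * φ ‖z - c‖) := by
    have hGmeas := measurable_indicator_of_continuousOn hG.continuousOn measurableSet_ball
    convert (hGmeas.enorm.pow_const 2).mul (hφ.comp (measurable_id.sub_const c).norm) using 1
    ext z
    by_cases hz : z ∈ ball c R <;> simp [hz]
  calc ∫⁻ z in ball c R, ‖G z‖ₑ ^ 2 * φ ‖z - c‖
      = ∫⁻ r in Ioi 0, (Iio R).indicator (fun r => ENNReal.ofReal r *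
          ∫⁻ θ in Ioo (-Real.pi) Real.pi, ‖G (circleMap c r θ)‖ₑ ^ 2 * φ r) r := by
        rw [← lintegral_indicator measurableSet_ball, lintegral_eq_lintegral_circleMap hmeas c]
        refine setLIntegral_congr_fun measurableSet_Ioi fun r hr => ?_
        have hr' : |r| = r := abs_of_pos hr
        by_cases hrR : r < R
        · simp [indicator, hr', hrR, circleMap_sub_center, dist_eq_norm]
        · simp [indicator, hr', hrR, circleMap_sub_center, dist_eq_norm]
    _ = ∫⁻ r in Ioo 0 R, ENNReal.ofReal r *
          ∫⁻ θ in Ioo (-Real.pi) Real.pi, ‖G (circleMap c r θ)‖ₑ ^ 2 * φ r := by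
        rw [setLIntegral_indicator measurableSet_Iio, inter_comm, Ioi_inter_Iio]
    _ = ∫⁻ r in Ioo 0 R, ∑' n : ℕ,
          ENNReal.ofReal (2 * Real.pi * ‖iteratedDeriv n G c / n.factorial‖ ^ 2) *
            (ENNReal.ofReal (r ^ (2 * n + 1)) * φ r) := by
        refine setLIntegral_congr_fun measurableSet_Ioo fun r hr => ?_
        have hGr : DifferentiableOn ℂ G (closedBall c r) := hG.mono (closedBall_subset_ball hr.2)
        have hcont := (continuous_comp_circleMap hr.1.le hGr.continuousOn).enorm
        rw [lintegral_mul_const _ (hcont.measurable.pow_const 2),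
          lintegral_enorm_sq_circleMap hr.1 hGr, ← ENNReal.tsum_mul_right, ← ENNReal.tsum_mul_left]
        refine tsum_congr fun n => ?_
        rw [ENNReal.ofReal_mul (by positivity), pow_succ' r, ENNReal.ofReal_mul hr.1.le]
        ring
    _ = _ := by
        rw [lintegral_tsum fun n => by fun_prop]
        refine tsum_congr fun n => lintegral_const_mul _ (by fun_prop)

theorem setLIntegral_pow_mul_inv_sqrt_sq_sub_two_mul_sq {x : ℝ} (hx : 0 < x) (n : ℕ) :
    ∫⁻ r in Ioo 0 (x / √2),
        ENNReal.ofReal (r ^ (2 * n + 1)) * ENNReal.ofReal (√(x ^ 2 - 2 * r ^ 2))⁻¹ =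
      ENNReal.ofReal
        (x ^ (2 * n + 1) * (2 ^ n * n.factorial ^ 2 / (2 * (2 * n + 1).factorial))) := by
  have hscale (r : ℝ) : ENNReal.ofReal (√(x ^ 2 - 2 * r ^ 2))⁻¹ =
      ENNReal.ofReal (√((x / √2) ^ 2 - r ^ 2))⁻¹ * ENNReal.ofReal (√2)⁻¹ := by
    rw [← ENNReal.ofReal_mul (by positivity), ← mul_inv, ← Real.sqrt_mul' _ zero_le_two, div_pow,
      Real.sq_sqrt zero_le_two]
    ring_nf
  simp only [hscale, ← mul_assoc]
  rw [lintegral_mul_const _ (by fun_prop), setLIntegral_pow_mul_inv_sqrt_sq_sub_sq (by positivity),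
    ← ENNReal.ofReal_mul (by positivity)]
  congr 1
  have hsqrt : √2 ^ (2 * n + 1) * √2 = 2 ^ n * 2 := by
    rw [← pow_succ, show 2 * n + 1 + 1 = 2 * (n + 1) by ring, pow_mul, Real.sq_sqrt zero_le_two,
      pow_succ]
  have hfour : (4 : ℝ) ^ n = 2 ^ n * 2 ^ n := by rw [← mul_pow]; norm_num
  calc (x / √2) ^ (2 * n + 1) * (4 ^ n * n.factorial ^ 2 / (2 * n + 1).factorial) * (√2)⁻¹
      = x ^ (2 * n + 1) * (4 ^ n * n.factorial ^ 2 / (2 * n + 1).factorial) /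
          (√2 ^ (2 * n + 1) * √2) := by rw [div_pow]; ring
    _ = _ := by rw [hsqrt, hfour]; field_simp

/-! ### The kernel of a corner sum -/

/-- The weight on the disk `B(x, x/√2)` whose moments are the coefficients of `cornerSum`. It
vanishes off that disk because `√` of a nonpositive number and `0⁻¹` are `0`. -/
noncomputable def diskWeight (x : ℝ) (z : ℂ) : ℝ≥0∞ :=
  ENNReal.ofReal (√(x ^ 2 - 2 * ‖z - x‖ ^ 2))⁻¹

theorem mem_ball_of_diskWeight_ne_zero {x : ℝ} {z : ℂ} (hx : 0 ≤ x) (h : diskWeight x z ≠ 0) :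
    z ∈ ball (x : ℂ) (x / √2) := by
  have hpos : 0 < x ^ 2 - 2 * ‖z - x‖ ^ 2 := by
    by_contra! hle
    exact h (by simp [diskWeight, Real.sqrt_eq_zero_of_nonpos hle])
  rw [mem_ball, dist_eq_norm, lt_div_iff₀ (by positivity)]
  refine lt_of_pow_lt_pow_left₀ 2 hx ?_
  rw [mul_pow, Real.sq_sqrt zero_le_two]
  linarith

theorem setLIntegral_ball_enorm_sq_mul_diskWeight {G : ℂ → ℂ} {x : ℝ} (hx : 0 < x)
    (hG : DifferentiableOn ℂ G (ball (x : ℂ) (x / √2))) :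
    ∫⁻ z in ball (x : ℂ) (x / √2), ‖G z‖ₑ ^ 2 * diskWeight x z =
      ENNReal.ofReal Real.pi * ∑' n : ℕ, ENNReal.ofReal (2 ^ n / (2 * n + 1).factorial) *
        (ENNReal.ofReal (x ^ (2 * n + 1)) * ‖iteratedDeriv n G x‖ₑ ^ 2) := by
  rw [← ENNReal.tsum_mul_left]
  refine (setLIntegral_ball_enorm_sq_mul hG
    (φ := fun r => ENNReal.ofReal (√(x ^ 2 - 2 * r ^ 2))⁻¹) (by fun_prop)).trans
    (tsum_congr fun n => ?_)
  rw [setLIntegral_pow_mul_inv_sqrt_sq_sub_two_mul_sq hx, ← ofReal_norm,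
    ← ENNReal.ofReal_pow (norm_nonneg _), ← ENNReal.ofReal_mul (by positivity),
    ← ENNReal.ofReal_mul (by positivity), ← ENNReal.ofReal_mul (by positivity),
    ← ENNReal.ofReal_mul (by positivity), norm_div, Complex.norm_natCast]
  congr 1
  field_simp

/-- The density on `cornerCone a` obtained by averaging the disk weights: integrating `|F|²`
against it gives `π * cornerSum a F`. -/
noncomputable def cornerKernel (a : ℝ) (z : ℂ) : ℝ≥0∞ :=
  ∫⁻ x in Ioo 0 a, diskWeight x z

theorem setLIntegral_cornerCone_enorm_sq_mul_diskWeight {a x : ℝ} (hx : x ∈ Ioo 0 a) (G : ℂ → ℂ) :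
    ∫⁻ z in cornerCone a, ‖G z‖ₑ ^ 2 * diskWeight x z =
      ∫⁻ z in ball (x : ℂ) (x / √2), ‖G z‖ₑ ^ 2 * diskWeight x z := by
  rw [← inter_eq_left.2 (ball_subset_cornerCone hx), ← setLIntegral_indicator measurableSet_ball]
  refine lintegral_congr fun z => ?_
  by_cases hz : z ∈ ball (x : ℂ) (x / √2)
  · rw [indicator_of_mem hz]
  · rw [indicator_of_notMem hz,
      not_ne_iff.1 (mt (mem_ball_of_diskWeight_ne_zero hx.1.le) hz), mul_zero]

theorem setLIntegral_enorm_sq_mul_cornerKernel {G : ℂ → ℂ} {a : ℝ}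
    (hG : DifferentiableOn ℂ G (cornerCone a)) :
    ∫⁻ z in cornerCone a, ‖G z‖ₑ ^ 2 * cornerKernel a z =
      ENNReal.ofReal Real.pi * cornerSum a (fun x => G x) := by
  have hopen := isOpen_cornerCone a
  have hweight : Measurable fun p : ℂ × ℝ => diskWeight p.2 p.1 := by
    unfold diskWeight; fun_prop
  have hmem {x : ℝ} (hx : x ∈ Ioo 0 a) : (x : ℂ) ∈ cornerCone a :=
    ofReal_mem_cornerCone (Ioo_subset_Ioc_self hx)
  have hsmooth : ContDiffOn ℝ (⊤ : ℕ∞) (fun x : ℝ => G x) (Ioo 0 a) :=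
    ((hG.contDiffOn hopen).restrict_scalars ℝ).comp Complex.ofRealCLM.contDiff.contDiffOn
      fun _ => hmem
  calc ∫⁻ z in cornerCone a, ‖G z‖ₑ ^ 2 * cornerKernel a z
      = ∫⁻ z in cornerCone a, ∫⁻ x in Ioo 0 a, ‖G z‖ₑ ^ 2 * diskWeight x z :=
        lintegral_congr fun z =>
          (lintegral_const_mul _ (hweight.comp measurable_prodMk_left)).symm
    _ = ∫⁻ x in Ioo 0 a, ∫⁻ z in cornerCone a, ‖G z‖ₑ ^ 2 * diskWeight x z :=
        lintegral_lintegral_swap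
          (((hG.continuousOn.aemeasurable hopen.measurableSet).enorm.pow_const 2).comp_fst.mul
            hweight.aemeasurable)
    _ = ∫⁻ x in Ioo 0 a, ENNReal.ofReal Real.pi *
          ∑' n : ℕ, ENNReal.ofReal (2 ^ n / (2 * n + 1).factorial) *
            (ENNReal.ofReal (x ^ (2 * n + 1)) * ‖iteratedDeriv n (fun t : ℝ => G t) x‖ₑ ^ 2) :=
        setLIntegral_congr_fun measurableSet_Ioo fun x hx => by
          simp only [iteratedDeriv_comp_ofReal_of_differentiableOn hG hopen _ (hmem hx)]
          rw [setLIntegral_cornerCone_enorm_sq_mul_diskWeight hx,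
            setLIntegral_ball_enorm_sq_mul_diskWeight hx.1 (hG.mono (ball_subset_cornerCone hx))]
    _ = _ := by
        rw [lintegral_const_mul' _ _ ENNReal.ofReal_ne_top, cornerSum_eq_lintegral_tsum hsmooth]

theorem diskWeight_eq (x : ℝ) (z : ℂ) :
    diskWeight x z = ENNReal.ofReal (√(2 * (z.re ^ 2 - z.im ^ 2) - (x - 2 * z.re) ^ 2))⁻¹ := by
  rw [diskWeight, Complex.sq_norm, Complex.normSq_apply, Complex.sub_re, Complex.sub_im,
    Complex.ofReal_re, Complex.ofReal_im]
  ring_nf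

theorem cornerKernel_le (a : ℝ) (z : ℂ) : cornerKernel a z ≤ ENNReal.ofReal Real.pi := by
  simp only [cornerKernel, diskWeight_eq]
  rcases le_or_gt (z.re ^ 2 - z.im ^ 2) 0 with hle | hpos
  · have hsqrt (x : ℝ) : √(2 * (z.re ^ 2 - z.im ^ 2) - (x - 2 * z.re) ^ 2) = 0 :=
      Real.sqrt_eq_zero_of_nonpos (by nlinarith [sq_nonneg (x - 2 * z.re)])
    simp [hsqrt]
  · have htotal := lintegral_inv_sqrt_sq_sub_sq
      (Real.sqrt_pos.2 (by positivity : 0 < 2 * (z.re ^ 2 - z.im ^ 2))) (2 * z.re)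
    rw [Real.sq_sqrt (by positivity)] at htotal
    exact (setLIntegral_le_lintegral _ _).trans_eq htotal

/-- The square with opposite vertices `0` and `a`; for `a = 1/2` it is the quarter of `SquareD`
at the corner `0`. The sides not through `0` are included, so that the four quarters cover. -/
def quarterSquare (a : ℝ) : Set ℂ :=
  {z | z.re + z.im ∈ Ioc 0 a ∧ z.re - z.im ∈ Ioc 0 a}

theorem le_cornerKernel {a : ℝ} {z : ℂ} (hz : z ∈ quarterSquare a) :
    ENNReal.ofReal (Real.pi / 4) ≤ cornerKernel a z := by
  obtain ⟨⟨hu, hua⟩, hv, hva⟩ := hz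
  have hprod : 0 < z.re ^ 2 - z.im ^ 2 := by nlinarith
  set R := √(2 * (z.re ^ 2 - z.im ^ 2))
  have hRpos : 0 < R := Real.sqrt_pos.2 (by positivity)
  have hRsq : R ^ 2 = 2 * (z.re ^ 2 - z.im ^ 2) := Real.sq_sqrt (by positivity)
  have hcos : Real.cos (Real.pi - Real.pi / 4) = -(√2 / 2) := by
    rw [Real.cos_pi_sub, Real.cos_pi_div_four]
  have hlower : 0 ≤ 2 * z.re + R * Real.cos Real.pi := by
    have hle : R ≤ 2 * z.re := Real.sqrt_le_iff.2 ⟨by linarith, by nlinarith [sq_nonneg z.im]⟩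
    rw [Real.cos_pi]
    linarith
  have hupper : 2 * z.re + R * Real.cos (Real.pi - Real.pi / 4) ≤ a := by
    rw [hcos]
    have hsq : (R * (√2 / 2)) ^ 2 = (z.re + z.im) * (z.re - z.im) := by
      rw [mul_pow, div_pow, Real.sq_sqrt zero_le_two, hRsq]; ring
    have hnonneg : 0 ≤ R * (√2 / 2) := by positivity
    by_contra! hlt
    nlinarith
  calc ENNReal.ofReal (Real.pi / 4)
      = ∫⁻ _ in Ioo (Real.pi - Real.pi / 4) Real.pi, 1 := by simp
    _ = ∫⁻ x in Ioo (2 * z.re + R * Real.cos Real.pi)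
          (2 * z.re + R * Real.cos (Real.pi - Real.pi / 4)), diskWeight x z := by
        simp only [diskWeight_eq, ← hRsq]
        simpa using (setLIntegral_mul_inv_sqrt_sq_sub_sq (α := Real.pi - Real.pi / 4) hRpos
          (by linarith [Real.pi_pos]) (by linarith [Real.pi_pos]) le_rfl (2 * z.re) 1).symm
    _ ≤ cornerKernel a z := lintegral_mono_set (Ioo_subset_Ioo hlower hupper)

theorem quarterSquare_subset_cornerCone (a : ℝ) : quarterSquare a ⊆ cornerCone a := by
  intro z hz
  by_contra hcone
  have hweight (x : ℝ) (hx : x ∈ Ioo 0 a) : diskWeight x z = 0 := by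
    by_contra hne
    exact hcone (ball_subset_cornerCone hx (mem_ball_of_diskWeight_ne_zero hx.1.le hne))
  have hker : cornerKernel a z = 0 := by
    rw [cornerKernel, setLIntegral_congr_fun measurableSet_Ioo hweight, lintegral_zero]
  have hle := le_cornerKernel hz
  rw [hker, nonpos_iff_eq_zero, ENNReal.ofReal_eq_zero] at hle
  linarith [Real.pi_pos]

theorem measurableSet_quarterSquare (a : ℝ) : MeasurableSet (quarterSquare a) :=
  ((Complex.measurable_re.add Complex.measurable_im) measurableSet_Ioc).inter
    ((Complex.measurable_re.sub Complex.measurable_im) measurableSet_Ioc)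

theorem cornerSum_le_setLIntegral_cornerCone {G : ℂ → ℂ} {a : ℝ}
    (hG : DifferentiableOn ℂ G (cornerCone a)) :
    cornerSum a (fun x => G x) ≤ ∫⁻ z in cornerCone a, ‖G z‖ₑ ^ 2 := by
  refine (ENNReal.mul_le_mul_iff_right (ENNReal.ofReal_pos.2 Real.pi_pos).ne'
    ENNReal.ofReal_ne_top).1 ?_
  rw [← setLIntegral_enorm_sq_mul_cornerKernel hG, mul_comm,
    ← lintegral_mul_const' _ _ ENNReal.ofReal_ne_top]
  gcongr
  exact cornerKernel_le a _

theorem setLIntegral_quarterSquare_le_cornerSum {G : ℂ → ℂ} {a : ℝ}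
    (hG : DifferentiableOn ℂ G (cornerCone a)) :
    ENNReal.ofReal (1 / 4) * ∫⁻ z in quarterSquare a, ‖G z‖ₑ ^ 2 ≤
      cornerSum a (fun x => G x) := by
  refine (ENNReal.mul_le_mul_iff_right (ENNReal.ofReal_pos.2 Real.pi_pos).ne'
    ENNReal.ofReal_ne_top).1 ?_
  rw [← setLIntegral_enorm_sq_mul_cornerKernel hG, ← mul_assoc,
    ← ENNReal.ofReal_mul Real.pi_pos.le, mul_one_div, mul_comm,
    ← lintegral_mul_const' _ _ ENNReal.ofReal_ne_top]
  calc ∫⁻ z in quarterSquare a, ‖G z‖ₑ ^ 2 * ENNReal.ofReal (Real.pi / 4)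
      ≤ ∫⁻ z in quarterSquare a, ‖G z‖ₑ ^ 2 * cornerKernel a z :=
        setLIntegral_mono' (measurableSet_quarterSquare a) fun z hz =>
          mul_le_mul_right (le_cornerKernel hz) _
    _ ≤ _ := lintegral_mono_set (quarterSquare_subset_cornerCone a)

/-! ### The four quarters of the square -/

theorem mem_squareD_iff {z : ℂ} : z ∈ SquareD ↔ |z.re - 1 / 2| + |z.im| < 1 / 2 := by
  simp only [SquareD, mem_ofPred_eq, lt_min_iff]
  grind

/-- The rotation about the center `1/2` of `SquareD` by `k` quarter turns; it takes the corner `0`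
to the `k`-th corner of the square, counterclockwise. -/
noncomputable def quarterTurn (k : ℕ) (z : ℂ) : ℂ :=
  Complex.I ^ k * (z - 1 / 2) + 1 / 2

theorem quarterTurn_quarterTurn (k l : ℕ) (z : ℂ) :
    quarterTurn k (quarterTurn l z) = quarterTurn (k + l) z := by
  simp only [quarterTurn]
  ring

theorem quarterTurn_three_mul_quarterTurn (k : ℕ) (z : ℂ) :
    quarterTurn (3 * k) (quarterTurn k z) = z := by
  rw [quarterTurn_quarterTurn, quarterTurn, show 3 * k + k = 4 * k by ring, pow_mul,
    Complex.I_pow_four, one_pow]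
  ring

theorem quarterTurn_half (k : ℕ) : quarterTurn k (1 / 2) = 1 / 2 := by
  simp [quarterTurn]

theorem differentiable_quarterTurn (k : ℕ) : Differentiable ℂ (quarterTurn k) := by
  unfold quarterTurn
  fun_prop

theorem measurableEmbedding_quarterTurn (k : ℕ) : MeasurableEmbedding (quarterTurn k) :=
  (differentiable_quarterTurn k).continuous.measurableEmbedding
    (Function.LeftInverse.injective (quarterTurn_three_mul_quarterTurn k))

theorem measurePreserving_quarterTurn (k : ℕ) :
    MeasurePreserving (quarterTurn k) volume volume :=
  ((measurePreserving_add_right volume (1 / 2 : ℂ)).comp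
    (rotation ⟨Complex.I ^ k, by simp [Submonoid.unitSphere]⟩).measurePreserving).comp
      (measurePreserving_sub_right volume (1 / 2 : ℂ))

theorem quarterTurn_mem_squareD_iff (k : ℕ) {z : ℂ} : quarterTurn k z ∈ SquareD ↔ z ∈ SquareD := by
  induction k with
  | zero => simp [quarterTurn]
  | succ k ih =>
    rw [add_comm, ← quarterTurn_quarterTurn, ← ih]
    generalize quarterTurn k z = w
    simp [mem_squareD_iff, quarterTurn, add_comm]

theorem convex_quarterTurn_preimage {s : Set ℂ} (hs : Convex ℝ s) (k : ℕ) :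
    Convex ℝ (quarterTurn k ⁻¹' s) :=
  ((hs.translate_preimage_left (1 / 2)).linear_preimage
    (LinearMap.mulLeft ℝ (Complex.I ^ k))).translate_preimage_left (-(1 / 2))

theorem abs_re_add_abs_im_le_sqrt_two_mul_norm (z : ℂ) : |z.re| + |z.im| ≤ √2 * ‖z‖ := by
  refine (Real.le_sqrt_of_sq_le (y := 2 * ‖z‖ ^ 2) ?_).trans_eq (by simp)
  rw [Complex.sq_norm, Complex.normSq_apply, ← sq, ← sq, ← sq_abs z.re, ← sq_abs z.im]
  exact add_sq_le

theorem cornerCone_half_subset_squareD : cornerCone (1 / 2) ⊆ SquareD := by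
  intro z hz
  simp only [cornerCone, mem_iUnion₂, mem_ball, dist_eq_norm] at hz
  obtain ⟨x, ⟨hx0, hx⟩, hzx⟩ := hz
  have habs : |z.re - x| + |z.im| < x := calc
    |z.re - x| + |z.im| ≤ √2 * ‖z - x‖ := by
      simpa using abs_re_add_abs_im_le_sqrt_two_mul_norm (z - x)
    _ < x := by rwa [lt_div_iff₀' (by positivity)] at hzx
  rw [mem_squareD_iff]
  grind

theorem quarterTurn_three (z : ℂ) : quarterTurn 3 z = ⟨z.im + 1 / 2, 1 / 2 - z.re⟩ := by
  apply Complex.ext <;> simp [quarterTurn]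

theorem exists_quarterTurn_mem_quarterSquare {z : ℂ} (hz : z ∈ SquareD) :
    ∃ j : Fin 4, quarterTurn (3 * j) z ∈ quarterSquare (1 / 2) := by
  rw [mem_squareD_iff] at hz
  have h₀ : quarterTurn 0 z = z := by simp [quarterTurn]
  have h₆ : quarterTurn 6 z = ⟨1 - z.re, -z.im⟩ := by
    rw [← quarterTurn_quarterTurn 3 3 z, quarterTurn_three, quarterTurn_three]
    ring_nf
  have h₉ : quarterTurn 9 z = ⟨1 / 2 - z.im, z.re - 1 / 2⟩ := by
    rw [← quarterTurn_quarterTurn 3 6 z, h₆, quarterTurn_three]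
    ring_nf
  rcases le_or_gt (z.re + z.im) (1 / 2) with hadd | hadd <;>
    rcases le_or_gt (z.re - z.im) (1 / 2) with hsub | hsub
  · refine ⟨0, ?_⟩
    simp only [Fin.val_zero, mul_zero, h₀, quarterSquare, mem_ofPred_eq, mem_Ioc]
    grind
  · refine ⟨1, ?_⟩
    simp only [Fin.val_one, mul_one, quarterTurn_three, quarterSquare, mem_ofPred_eq, mem_Ioc]
    grind
  · refine ⟨3, ?_⟩
    change quarterTurn 9 z ∈ _
    simp only [h₉, quarterSquare, mem_ofPred_eq, mem_Ioc]
    grind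
  · refine ⟨2, ?_⟩
    change quarterTurn 6 z ∈ _
    simp only [h₆, quarterSquare, mem_ofPred_eq, mem_Ioc]
    grind

theorem differentiableOn_comp_quarterTurn {F : ℂ → ℂ} (hF : DifferentiableOn ℂ F SquareD) (k : ℕ) :
    DifferentiableOn ℂ (fun z => F (quarterTurn k z)) (cornerCone (1 / 2)) :=
  hF.comp (differentiable_quarterTurn k).differentiableOn fun _ hz =>
    (quarterTurn_mem_squareD_iff k).2 (cornerCone_half_subset_squareD hz)

theorem sum_cornerSum_le_setLIntegral_squareD {F : ℂ → ℂ} (hF : DifferentiableOn ℂ F SquareD) :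
    ∑ j : Fin 4, cornerSum (1 / 2) (fun x => F (quarterTurn j x)) ≤
      4 * ∫⁻ z in SquareD, ‖F z‖ₑ ^ 2 := by
  have hcorner (j : Fin 4) : cornerSum (1 / 2) (fun x => F (quarterTurn j x)) ≤
      ∫⁻ z in SquareD, ‖F z‖ₑ ^ 2 := calc
    _ ≤ ∫⁻ z in cornerCone (1 / 2), ‖F (quarterTurn j z)‖ₑ ^ 2 :=
      cornerSum_le_setLIntegral_cornerCone (differentiableOn_comp_quarterTurn hF j)
    _ ≤ ∫⁻ z in quarterTurn j ⁻¹' SquareD, ‖F (quarterTurn j z)‖ₑ ^ 2 :=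
      lintegral_mono_set fun z hz =>
        (quarterTurn_mem_squareD_iff j).2 (cornerCone_half_subset_squareD hz)
    _ = ∫⁻ z in SquareD, ‖F z‖ₑ ^ 2 :=
      (measurePreserving_quarterTurn j).setLIntegral_comp_preimage_emb
        (measurableEmbedding_quarterTurn j) (fun z => ‖F z‖ₑ ^ 2) SquareD
  calc ∑ j : Fin 4, cornerSum (1 / 2) (fun x => F (quarterTurn j x))
      ≤ ∑ _ : Fin 4, ∫⁻ z in SquareD, ‖F z‖ₑ ^ 2 := Finset.sum_le_sum fun j _ => hcorner j
    _ = 4 * ∫⁻ z in SquareD, ‖F z‖ₑ ^ 2 := by simp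

theorem setLIntegral_squareD_le_sum_cornerSum {F : ℂ → ℂ} (hF : DifferentiableOn ℂ F SquareD) :
    ENNReal.ofReal (1 / 4) * ∫⁻ z in SquareD, ‖F z‖ₑ ^ 2 ≤
      ∑ j : Fin 4, cornerSum (1 / 2) (fun x => F (quarterTurn j x)) := by
  have hcover : SquareD ⊆ ⋃ j : Fin 4, quarterTurn (3 * j) ⁻¹' quarterSquare (1 / 2) :=
    fun z hz => mem_iUnion.2 (exists_quarterTurn_mem_quarterSquare hz)
  have hquarter (j : Fin 4) : ∫⁻ z in quarterTurn (3 * j) ⁻¹' quarterSquare (1 / 2), ‖F z‖ₑ ^ 2 =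
      ∫⁻ z in quarterSquare (1 / 2), ‖F (quarterTurn j z)‖ₑ ^ 2 := by
    rw [← (measurePreserving_quarterTurn j).setLIntegral_comp_preimage_emb
      (measurableEmbedding_quarterTurn j)]
    simp only [preimage_preimage, quarterTurn_three_mul_quarterTurn, preimage_id']
  calc ENNReal.ofReal (1 / 4) * ∫⁻ z in SquareD, ‖F z‖ₑ ^ 2
      ≤ ENNReal.ofReal (1 / 4) *
          ∑ j : Fin 4, ∫⁻ z in quarterTurn (3 * j) ⁻¹' quarterSquare (1 / 2), ‖F z‖ₑ ^ 2 := by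
        gcongr
        exact ((lintegral_mono_set hcover).trans (lintegral_iUnion_le _ _)).trans_eq
          (tsum_fintype _)
    _ ≤ ∑ j : Fin 4, cornerSum (1 / 2) (fun x => F (quarterTurn j x)) := by
        simp only [hquarter, Finset.mul_sum]
        exact Finset.sum_le_sum fun j _ =>
          setLIntegral_quarterSquare_le_cornerSum (differentiableOn_comp_quarterTurn hF j)

theorem comp_quarterTurn_eventuallyEq_of_eventually_ofReal_eq {f : ℝ → ℂ} {F₀ G : ℂ → ℂ} {k : ℕ}
    (hF₀ : AnalyticAt ℂ F₀ (1 / 2)) (hG : DifferentiableOn ℂ G (cornerCone (1 / 2)))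
    (hGf : ∀ x ∈ Ioo (0 : ℝ) (1 / 2), G x = f x)
    (hf : ∀ᶠ x in nhdsWithin (1 / 2 : ℝ) (Iic (1 / 2)), f x = F₀ (quarterTurn k x)) :
    (fun z => G (quarterTurn (3 * k) z)) =ᶠ[nhds (1 / 2)] F₀ := by
  have hhalf : ((1 / 2 : ℝ) : ℂ) = 1 / 2 := by push_cast; rfl
  have hGan : AnalyticAt ℂ G (1 / 2 : ℝ) :=
    hG.analyticAt ((isOpen_cornerCone _).mem_nhds (ofReal_mem_cornerCone (by norm_num)))
  have hF₀an : AnalyticAt ℂ (fun z => F₀ (quarterTurn k z)) (1 / 2 : ℝ) :=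
    .fun_comp (by rwa [hhalf, quarterTurn_half]) ((differentiable_quarterTurn k).analyticAt _)
  have hleft : ∀ᶠ x : ℝ in nhdsWithin (1 / 2) (Iio (1 / 2)), G x = F₀ (quarterTurn k x) := by
    filter_upwards [hf.filter_mono (nhdsWithin_mono _ Iio_subset_Iic_self),
      Ioo_mem_nhdsLT (show (0 : ℝ) < 1 / 2 by norm_num)] with x hx hxI
    rw [hGf x hxI, hx]
  have heq := eventuallyEq_of_frequently_ofReal_eq hGan hF₀an
    (hleft.frequently.filter_mono (nhdsWithin_mono _ fun _ hx => ne_of_lt hx))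
  rw [hhalf] at heq
  have hturn := (differentiable_quarterTurn (3 * k)).continuous.tendsto (1 / 2)
  rw [quarterTurn_half] at hturn
  refine (hturn.eventually heq).mono fun z hz => hz.trans ?_
  dsimp only
  rw [quarterTurn_quarterTurn, add_comm, ← quarterTurn_quarterTurn,
    quarterTurn_three_mul_quarterTurn]

theorem exists_differentiableOn_squareD {f : Fin 4 → ℝ → ℂ} {F₀ : ℂ → ℂ}
    (hf : ∀ j, ContDiffOn ℝ (⊤ : ℕ∞) (f j) (Ioo 0 (1 / 2)))
    (hS : ∀ j, cornerSum (1 / 2) (f j) ≠ ∞) (hF₀ : AnalyticAt ℂ F₀ (1 / 2))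
    (hfF₀ : ∀ j : Fin 4, ∀ᶠ x in nhdsWithin (1 / 2 : ℝ) (Iic (1 / 2)),
      f j x = F₀ (quarterTurn j x)) :
    ∃ F : ℂ → ℂ, DifferentiableOn ℂ F SquareD ∧
      ∀ j : Fin 4, ∀ x ∈ Ioc (0 : ℝ) (1 / 2), F (quarterTurn j x) = f j x := by
  choose G hG hGf using fun j => exists_differentiableOn_cornerCone (hf j) (hS j)
  set U : Fin 4 → Set ℂ := fun j => quarterTurn (3 * j) ⁻¹' cornerCone (1 / 2) with hU
  have hhalf : ((1 / 2 : ℝ) : ℂ) = 1 / 2 := by push_cast; rfl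
  have hUopen (j : Fin 4) : IsOpen (U j) :=
    (isOpen_cornerCone _).preimage (differentiable_quarterTurn _).continuous
  have hUconvex (j : Fin 4) : Convex ℝ (U j) := convex_quarterTurn_preimage (convex_cornerCone _) _
  have hUhalf (j : Fin 4) : 1 / 2 ∈ U j := by
    rw [hU, mem_preimage, quarterTurn_half, ← hhalf]
    exact ofReal_mem_cornerCone (by norm_num)
  have hpiece (j : Fin 4) : DifferentiableOn ℂ (fun z => G j (quarterTurn (3 * j) z)) (U j) :=
    (hG j).comp (differentiable_quarterTurn _).differentiableOn fun _ hz => hz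
  have hnear (j : Fin 4) :=
    comp_quarterTurn_eventuallyEq_of_eventually_ofReal_eq hF₀ (hG j) (hGf j) (hfF₀ j)
  obtain ⟨F, hF, hFG⟩ := exists_differentiableOn_iUnion_eqOn hUopen hpiece fun i j =>
    eqOn_inter_of_eventuallyEq (hUopen i) (hUopen j)
      ((hUconvex i).inter (hUconvex j)).isPreconnected (hpiece i) (hpiece j)
      ⟨hUhalf i, hUhalf j⟩ ((hnear i).trans (hnear j).symm)
  refine ⟨F, hF.mono fun z hz => ?_, fun j x ⟨hx0, hx⟩ => ?_⟩
  · obtain ⟨j, hj⟩ := exists_quarterTurn_mem_quarterSquare hz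
    exact mem_iUnion.2 ⟨j, quarterSquare_subset_cornerCone _ hj⟩
  · rcases hx.eq_or_lt with rfl | hx
    · rw [(hfF₀ j).self_of_nhdsWithin self_mem_Iic, hhalf, quarterTurn_half]
      exact (hFG j (hUhalf j)).trans (hnear j).eq_of_nhds
    · have hxU : quarterTurn j x ∈ U j := by
        rw [hU, mem_preimage, quarterTurn_three_mul_quarterTurn]
        exact ofReal_mem_cornerCone ⟨hx0, hx.le⟩
      rw [hFG j hxU]
      simp only [quarterTurn_three_mul_quarterTurn, hGf j x ⟨hx0, hx⟩]

/-! ### The data on the two diagonals -/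

/-- The data on the four half-diagonals, each parametrized from its corner: the sought `F` has to
satisfy `F (quarterTurn j x) = cornerData g h j x` for `0 < x ≤ 1/2`. -/
noncomputable def cornerData (g h : ℝ → ℂ) : Fin 4 → ℝ → ℂ :=
  ![g, fun x => h (x - 1 / 2), fun x => g (1 - x), fun x => h (1 / 2 - x)]

theorem contDiffOn_cornerData {g h : ℝ → ℂ} (hg : ContDiffOn ℝ (⊤ : ℕ∞) g (Ioo 0 1))
    (hh : ContDiffOn ℝ (⊤ : ℕ∞) h (Ioo (-(1 / 2)) (1 / 2))) (j : Fin 4) :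
    ContDiffOn ℝ (⊤ : ℕ∞) (cornerData g h j) (Ioo 0 (1 / 2)) := by
  fin_cases j
  · exact hg.mono fun x hx => ⟨hx.1, by linarith [hx.2]⟩
  · exact hh.comp (contDiffOn_id.sub contDiffOn_const) fun x hx =>
      ⟨by simpa using hx.1, by linarith [hx.2]⟩
  · exact hg.comp (contDiffOn_const.sub contDiffOn_id) fun x hx =>
      ⟨by linarith [hx.2], by simpa using hx.1⟩
  · exact hh.comp (contDiffOn_const.sub contDiffOn_id) fun x hx =>
      ⟨by linarith [hx.2], by simpa using hx.1⟩

theorem sum_enorm_iteratedDeriv_cornerData_sq (g h : ℝ → ℂ) (n : ℕ) {x : ℝ}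
    (hx : x ∈ Ioo 0 (1 / 2)) :
    ∑ j, ‖iteratedDeriv n (cornerData g h j) x‖ₑ ^ 2 =
      ‖iteratedDerivWithin n g (Ioo 0 1) x‖ₑ ^ 2 +
        ‖iteratedDerivWithin n g (Ioo 0 1) (1 - x)‖ₑ ^ 2 +
        ‖iteratedDerivWithin n h (Ioo (-(1 / 2)) (1 / 2)) (1 / 2 - x)‖ₑ ^ 2 +
        ‖iteratedDerivWithin n h (Ioo (-(1 / 2)) (1 / 2)) (x - 1 / 2)‖ₑ ^ 2 := by
  obtain ⟨hx0, hx⟩ := hx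
  rw [iteratedDerivWithin_of_isOpen isOpen_Ioo ⟨hx0, by linarith⟩,
    iteratedDerivWithin_of_isOpen isOpen_Ioo (by constructor <;> linarith),
    iteratedDerivWithin_of_isOpen isOpen_Ioo (by constructor <;> linarith),
    iteratedDerivWithin_of_isOpen isOpen_Ioo (by constructor <;> linarith)]
  have henorm (w : ℂ) : ‖(-1 : ℝ) ^ n • w‖ₑ = ‖w‖ₑ := by simp
  simp only [Fin.sum_univ_four, cornerData, Matrix.cons_val, iteratedDeriv_comp_sub_const,
    iteratedDeriv_comp_const_sub, henorm]
  ring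

theorem diagDataSum_eq_sum_cornerSum {g h : ℝ → ℂ} (hg : ContDiffOn ℝ (⊤ : ℕ∞) g (Ioo 0 1))
    (hh : ContDiffOn ℝ (⊤ : ℕ∞) h (Ioo (-(1 / 2)) (1 / 2))) :
    diagDataSum g h = ∑ j, cornerSum (1 / 2) (cornerData g h j) := by
  simp only [cornerSum]
  rw [← Summable.tsum_finsetSum fun _ _ => ENNReal.summable]
  refine tsum_congr fun n => ?_
  rw [← Finset.mul_sum, ← lintegral_finsetSum' _ fun j _ =>
    aemeasurable_pow_mul_enorm_iteratedDeriv_sq (contDiffOn_cornerData hg hh j) n]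
  refine congrArg _ (setLIntegral_congr_fun measurableSet_Ioo fun x hx => ?_)
  rw [← Finset.mul_sum, sum_enorm_iteratedDeriv_cornerData_sq g h n hx]
  rfl

theorem quarterTurn_one_ofReal (x : ℝ) :
    quarterTurn 1 x = 1 / 2 + Complex.I * (x - 1 / 2 : ℝ) := by
  simp only [quarterTurn]; push_cast; ring

theorem quarterTurn_two_ofReal (x : ℝ) : quarterTurn 2 x = (1 - x : ℝ) := by
  simp only [quarterTurn, Complex.I_sq]; push_cast; ring

theorem quarterTurn_three_ofReal (x : ℝ) :
    quarterTurn 3 x = 1 / 2 + Complex.I * (1 / 2 - x : ℝ) := by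
  simp only [quarterTurn, Complex.I_pow_three]; push_cast; ring

theorem cornerData_eq_of_abs_sub_lt {g h : ℝ → ℂ} {F₀ : ℂ → ℂ} {r : ℝ}
    (hg : ∀ x : ℝ, |x - 1 / 2| < r → g x = F₀ x)
    (hh : ∀ t : ℝ, |t| < r → h t = F₀ (1 / 2 + Complex.I * t)) (j : Fin 4) {x : ℝ}
    (hx : |x - 1 / 2| < r) : cornerData g h j x = F₀ (quarterTurn j x) := by
  have hx' : |1 / 2 - x| < r := by rwa [abs_sub_comm]
  fin_cases j
  · simpa [cornerData, quarterTurn] using hg x hx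
  · exact (hh _ hx).trans (congrArg F₀ (quarterTurn_one_ofReal x).symm)
  · exact (hg (1 - x) (by convert hx' using 2; ring)).trans
      (congrArg F₀ (quarterTurn_two_ofReal x).symm)
  · exact (hh _ hx').trans (congrArg F₀ (quarterTurn_three_ofReal x).symm)

theorem eqOn_diagonals_of_eq_cornerData {g h : ℝ → ℂ} {F : ℂ → ℂ}
    (hF : ∀ j : Fin 4, ∀ x ∈ Ioc (0 : ℝ) (1 / 2), F (quarterTurn j x) = cornerData g h j x) :
    (∀ x ∈ Ioo (0 : ℝ) 1, F x = g x) ∧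
      ∀ t ∈ Ioo (-(1 / 2) : ℝ) (1 / 2), F (1 / 2 + Complex.I * t) = h t := by
  refine ⟨fun x ⟨hx0, hx1⟩ => ?_, fun t ⟨ht0, ht1⟩ => ?_⟩
  · rcases le_total x (1 / 2) with hx | hx
    · simpa [cornerData, quarterTurn] using hF 0 x ⟨hx0, hx⟩
    · have hFx := hF 2 (1 - x) ⟨by linarith, by linarith⟩
      rw [Fin.val_two, quarterTurn_two_ofReal] at hFx
      simpa [cornerData] using hFx
  · rcases le_total t 0 with ht | ht
    · have hFt := hF 1 (1 / 2 + t) ⟨by linarith, by linarith⟩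
      rw [Fin.val_one, quarterTurn_one_ofReal] at hFt
      simpa [cornerData] using hFt
    · have hFt := hF 3 (1 / 2 - t) ⟨by linarith, by linarith⟩
      rw [show ((3 : Fin 4) : ℕ) = 3 from rfl, quarterTurn_three_ofReal] at hFt
      simpa [cornerData] using hFt

/-- Smooth data on the two diagonals of the square `D`, compatible near the center `1/2`
(both arise from one holomorphic function on a small disk around `1/2`), with finite
(AHS)-type sum `S`, extend to a holomorphic function `F ∈ A²(D)`; moreover
`c ∫_D |F|² ≤ S ≤ C ∫_D |F|²` for absolute constants `c, C > 0`. -/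
theorem two_diagonal_recovery :
    ∃ c C : ℝ, 0 < c ∧ 0 < C ∧
      ∀ g h : ℝ → ℂ,
        ContDiffOn ℝ (⊤ : ℕ∞) g (Ioo 0 1) →
        ContDiffOn ℝ (⊤ : ℕ∞) h (Ioo (-(1 / 2)) (1 / 2)) →
        (∃ r : ℝ, 0 < r ∧ ∃ F₀ : ℂ → ℂ, DifferentiableOn ℂ F₀ (ball (1 / 2 : ℂ) r) ∧
          (∀ x : ℝ, |x - 1 / 2| < r → g x = F₀ (x : ℂ)) ∧
          (∀ t : ℝ, |t| < r → h t = F₀ (1 / 2 + Complex.I * (t : ℂ)))) →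
        diagDataSum g h < ⊤ →
        ∃ F : ℂ → ℂ, DifferentiableOn ℂ F SquareD ∧
          (∀ x ∈ Ioo (0 : ℝ) 1, F (x : ℂ) = g x) ∧
          (∀ t ∈ Ioo (-(1 / 2) : ℝ) (1 / 2), F (1 / 2 + Complex.I * (t : ℂ)) = h t) ∧
          (∫⁻ z in SquareD, (‖F z‖₊ : ℝ≥0∞) ^ 2 ∂volume) < ⊤ ∧
          ENNReal.ofReal c * ∫⁻ z in SquareD, (‖F z‖₊ : ℝ≥0∞) ^ 2 ∂volume ≤ diagDataSum g h ∧
          diagDataSum g h ≤ ENNReal.ofReal C * ∫⁻ z in SquareD, (‖F z‖₊ : ℝ≥0∞) ^ 2 ∂volume := by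
  refine ⟨1 / 4, 4, by norm_num, by norm_num,
    fun g h hg hh ⟨r, hr, F₀, hF₀, hgF₀, hhF₀⟩ hfin => ?_⟩
  have hdata := diagDataSum_eq_sum_cornerSum hg hh
  have hcorner (j : Fin 4) : cornerSum (1 / 2) (cornerData g h j) ≠ ∞ :=
    (ENNReal.sum_lt_top.1 (hdata ▸ hfin) j (Finset.mem_univ j)).ne
  have hcenter (j : Fin 4) : ∀ᶠ x in nhdsWithin (1 / 2 : ℝ) (Iic (1 / 2)),
      cornerData g h j x = F₀ (quarterTurn j x) :=
    nhdsWithin_le_nhds <| Filter.mem_of_superset (ball_mem_nhds _ hr) fun x =>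
      cornerData_eq_of_abs_sub_lt hgF₀ hhF₀ j
  obtain ⟨F, hF, hFdata⟩ := exists_differentiableOn_squareD (contDiffOn_cornerData hg hh) hcorner
    (hF₀.analyticAt (ball_mem_nhds _ hr)) hcenter
  obtain ⟨hFg, hFh⟩ := eqOn_diagonals_of_eq_cornerData hFdata
  have hsum : diagDataSum g h = ∑ j : Fin 4, cornerSum (1 / 2) (fun x => F (quarterTurn j x)) :=
    hdata.trans <| Finset.sum_congr rfl fun j _ =>
      cornerSum_congr fun x hx => (hFdata j x (Ioo_subset_Ioc_self hx)).symm
  have hlower := hsum ▸ setLIntegral_squareD_le_sum_cornerSum hF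
  have hupper := hsum ▸ sum_cornerSum_le_setLIntegral_squareD hF
  exact ⟨F, hF, hFg, hFh, ENNReal.lt_top_of_mul_ne_top_right (hlower.trans_lt hfin).ne (by simp),
    hlower, by rwa [ENNReal.ofReal_ofNat]⟩
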